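/- Let G be a grading group of the fusion category Rep(H*) and let M and N be any two subgroups of G. Then (H(M), H(N)) is a Mackey pair of Hopf subalgebras of H. -/

import Mathlib

open TensorProduct

namespace MackeyPaper

noncomputable section

universe v

variable (k : Type) [Field k] [CharZero k] [IsAlgClosed k]
variable (H : Type) [Ring H] [HopfAlgebra k H]

/-- A subcoalgebra of `H`: a `k`-subspace `C` with `Δ(C) ⊆ C ⊗ C`. -/
def IsSubcoalgebra (C : Submodule k H) : Prop :=
  ∀ c ∈ C, Coalgebra.comul (R := k) c ∈
    LinearMap.range (TensorProduct.map C.subtype C.subtype)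

/-- A simple (nonzero, minimal) subcoalgebra of `H`. -/
def IsSimpleSubcoalgebra (C : Submodule k H) : Prop :=
  IsSubcoalgebra k H C ∧ C ≠ ⊥ ∧
    ∀ D : Submodule k H, D ≤ C → IsSubcoalgebra k H D → D ≠ ⊥ → D = C

/-- A Hopf subalgebra of `H`: a subalgebra which is a subcoalgebra and is
stable under the antipode. -/
def IsHopfSubalgebra (K : Subalgebra k H) : Prop :=
  IsSubcoalgebra k H K.toSubmodule ∧ ∀ x ∈ K, HopfAlgebra.antipode (R := k) x ∈ K

/-- `Λ` is the (two-sided) idempotent integral of the Hopf subalgebra `K`,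
i.e. the integral normalized by `ε(Λ) = 1`. -/
def IsIdempotentIntegral (K : Subalgebra k H) (Λ : H) : Prop :=
  Λ ∈ K ∧ Coalgebra.counit (R := k) Λ = 1 ∧
    ∀ x ∈ K, x * Λ = Coalgebra.counit (R := k) x • Λ ∧
      Λ * x = Coalgebra.counit (R := k) x • Λ

/-- A cocommutative element of `H`; the cocommutative elements of `H` form
the character ring `C(H^*)`. -/
def IsCocomm (x : H) : Prop :=
  (TensorProduct.comm k H H) (Coalgebra.comul (R := k) x) = Coalgebra.comul (R := k) x

/-- The character ring `C(H^*)`, i.e. the space of cocommutative elements of `H`,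
as a `k`-subspace of `H`. -/
def charRing : Submodule k H :=
  LinearMap.ker ((TensorProduct.comm k H H).toLinearMap ∘ₗ Coalgebra.comul (R := k)
      - Coalgebra.comul (R := k))

/-- `d` is the irreducible character (of `H^*`) associated to the simple
subcoalgebra `C`: the unique cocommutative element of `C` whose counit is the
positive square root of `dim_k C`. -/
def IsCharacterOf (d : H) (C : Submodule k H) : Prop :=
  d ∈ C ∧ IsCocomm k H d ∧
    Coalgebra.counit (R := k) d = ((Nat.sqrt (Module.finrank k ↥C) : ℕ) : k)

/-- The right coset `CK` of a subcoalgebra `C`, i.e. the subspace `C·K`. -/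
def CKsub (K : Subalgebra k H) (C : Submodule k H) : Submodule k H :=
  C * K.toSubmodule

/-- The conjugate Hopf subalgebra `ᶜK` of `K` by a simple subcoalgebra `C`
(with associated irreducible character `c`): the span of all simple
subcoalgebras of `H` whose irreducible character `d` satisfies
`d·c·Λ_K = ε(d)·c·Λ_K`.  (The condition is stated for all cocommutative
elements of `C` resp. `D`; this is equivalent, since the cocommutative
elements of a simple subcoalgebra are exactly the scalar multiples of its
irreducible character.) -/
def conjK (K : Subalgebra k H) (Λ : H) (C : Submodule k H) : Submodule k H :=
  sSup {D : Submodule k H | IsSimpleSubcoalgebra k H D ∧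
    ∀ d ∈ D, IsCocomm k H d → ∀ c ∈ C, IsCocomm k H c →
      d * (c * Λ) = Coalgebra.counit (R := k) d • (c * Λ)}

/-- A complete irredundant system of representatives (by simple subcoalgebras)
of the double cosets `L\H/K`.  (Taking `L = ⊥` gives a system of
representatives of the right cosets `H/K`.) -/
def IsDoubleCosetReps (L K : Subalgebra k H) {ι : Type} (rep : ι → Submodule k H) : Prop :=
  (∀ i, IsSimpleSubcoalgebra k H (rep i)) ∧
  (∀ i j, L.toSubmodule * rep i * K.toSubmodule = L.toSubmodule * rep j * K.toSubmodule
      → i = j) ∧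
  (∀ C : Submodule k H, IsSimpleSubcoalgebra k H C →
      ∃ i, C ≤ L.toSubmodule * rep i * K.toSubmodule)

section Ind

variable (K : Subalgebra k H) (M : Type v) [AddCommGroup M] [Module k M]
  [Module ↥K M] [IsScalarTower k ↥K M]

/-- The relations defining the induced module `H ⊗_K M` as a quotient of
`H ⊗_k M`: the `H`-submodule generated by the elements `a ⊗ m - 1 ⊗ a·m`
for `a ∈ K` (equivalently, spanned by all `h·a ⊗ m - h ⊗ a·m`). -/
def indRel : Submodule H (H ⊗[k] M) :=
  Submodule.span H {z | ∃ (a : ↥K) (m : M),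
    z = (a : H) ⊗ₜ[k] m - (1 : H) ⊗ₜ[k] (a • m)}

/-- The induced module `M↑_K^H = H ⊗_K M`, a left `H`-module. -/
abbrev Ind := (H ⊗[k] M) ⧸ indRel k H K M

variable (C : Submodule k H)

/-- The underlying space `CK ⊗_k M` of which the conjugate module `ᶜM` is a
quotient. -/
def CKM : Type _ := ↥(CKsub k H K C) ⊗[k] M

instance : AddCommGroup (CKM k H K M C) :=
  inferInstanceAs (AddCommGroup (↥(CKsub k H K C) ⊗[k] M))

instance : Module k (CKM k H K M C) :=
  inferInstanceAs (Module k (↥(CKsub k H K C) ⊗[k] M))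

/-- The pure tensor `x ⊗ m` as an element of `CK ⊗_k M`. -/
def ckmk (x : ↥(CKsub k H K C)) (m : M) : CKM k H K M C := x ⊗ₜ[k] m

/-- The relations defining the conjugate module `ᶜM = CK ⊗_K M` as a quotient
of `CK ⊗_k M`: `x·a ⊗ m - x ⊗ a·m` for `a ∈ K`. -/
def conjRel : Submodule k (CKM k H K M C) :=
  Submodule.span k {z | ∃ (x : ↥(CKsub k H K C)) (a : ↥K) (m : M)
    (hxa : (x : H) * (a : H) ∈ CKsub k H K C),
    z = ckmk k H K M C ⟨(x : H) * (a : H), hxa⟩ m - ckmk k H K M C x (a • m)}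

/-- The conjugate module `ᶜM := CK ⊗_K M`. -/
abbrev ConjM := CKM k H K M C ⧸ conjRel k H K M C

/-- The canonical copy of the conjugate module `ᶜM = CK ⊗_K M` inside
`H ⊗_K M` (the image of `CK ⊗_K M` under multiplication; this is indeed a
copy of `ᶜM` since `H` is a free right `K`-module and `CK` is one of the
coset summands). -/
def conjMsub : Submodule k (Ind k H K M) :=
  Submodule.span k {z | ∃ (x : H) (_ : x ∈ CKsub k H K C) (m : M),
    z = Submodule.Quotient.mk (x ⊗ₜ[k] m)}

end Ind

section Comp

variable (L K : Subalgebra k H) (Λ : H) (C : Submodule k H)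
variable (M : Type v) [AddCommGroup M] [Module k M] [Module ↥K M] [IsScalarTower k ↥K M]

/-- The underlying space `L ⊗_k (CK ⊗_k M)`. -/
def LCM : Type _ := ↥L ⊗[k] CKM k H K M C

instance : AddCommGroup (LCM k H L K C M) :=
  inferInstanceAs (AddCommGroup (↥L ⊗[k] CKM k H K M C))

instance : Module k (LCM k H L K C M) :=
  inferInstanceAs (Module k (↥L ⊗[k] CKM k H K M C))

/-- The pure tensor `l ⊗ w` as an element of `L ⊗_k (CK ⊗_k M)`. -/
def lcmk (l : ↥L) (w : CKM k H K M C) : LCM k H L K C M := l ⊗ₜ[k] w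

/-- The relations defining `L ⊗_{L ∩ ᶜK} ᶜM` as a quotient of
`L ⊗_k (CK ⊗_k M)`: the balancedness relations over `L ∩ ᶜK` (first set),
together with (the image of) the relations defining `ᶜM = CK ⊗_K M`
(second set). -/
def compRel : Submodule k (LCM k H L K C M) :=
  Submodule.span k
    ({z | ∃ (l : ↥L) (a : H) (haL : a ∈ L) (_ : a ∈ conjK k H K Λ C)
        (x : ↥(CKsub k H K C)) (m : M) (hax : a * (x : H) ∈ CKsub k H K C),
        z = lcmk k H L K C M ⟨(l : H) * a, mul_mem l.2 haL⟩ (ckmk k H K M C x m)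
          - lcmk k H L K C M l (ckmk k H K M C ⟨a * (x : H), hax⟩ m)} ∪
     {z | ∃ (l : ↥L) (x : ↥(CKsub k H K C)) (a : ↥K) (m : M)
        (hxa : (x : H) * (a : H) ∈ CKsub k H K C),
        z = lcmk k H L K C M l (ckmk k H K M C ⟨(x : H) * (a : H), hxa⟩ m)
          - lcmk k H L K C M l (ckmk k H K M C x (a • m))})

/-- The module `L ⊗_{L ∩ ᶜK} ᶜM` (a left `L`-module via multiplication on the
first tensor factor). -/
abbrev Comp := LCM k H L K C M ⧸ compRel k H L K Λ C M

end Comp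

open DirectSum

section Mackey

variable (L K : Subalgebra k H) (Λ : H)

/-- The Mackey isomorphism property for the pair `(L, K)` at the `K`-module
`M`: for any system of double coset representatives, the left-multiplication
map `⊕_C L ⊗_{L ∩ ᶜK} ᶜM → M↑_K^H↓_L^H`, `l ⊗ v ↦ l·v`, is an isomorphism of
`L`-modules.  (A `k`-linear map satisfying the displayed formula on the
spanning elements is automatically `L`-equivariant for the evident
`L`-actions, so this property is stated for `k`-linear maps.) -/
def MackeyAt (M : Type v) [AddCommGroup M] [Module k M] [Module ↥K M]
    [IsScalarTower k ↥K M] [Module.Finite k M] : Prop :=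
  ∀ (ι : Type) [DecidableEq ι] (rep : ι → Submodule k H),
    IsDoubleCosetReps k H L K rep →
    ∃ π : (⨁ i : ι, Comp k H L K Λ (rep i) M) →ₗ[k] Ind k H K M,
      Function.Bijective π ∧
      ∀ (i : ι) (l : ↥L) (x : ↥(CKsub k H K (rep i))) (m : M),
        π (DirectSum.of (fun i => Comp k H L K Λ (rep i) M) i
            (Submodule.Quotient.mk (lcmk k H L K (rep i) M l (ckmk k H K M (rep i) x m)))) =
          Submodule.Quotient.mk (((l : H) * (x : H)) ⊗ₜ[k] m)

/-- `(L, K)` is a Mackey pair of Hopf subalgebras of `H` (here `Λ` is the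
idempotent integral of `K`): for every finite-dimensional `K`-module `M` the
left-multiplication homomorphism `π_M` is an isomorphism. -/
def IsMackeyPair : Prop :=
  ∀ (M : Type v) [AddCommGroup M] [Module k M] [Module ↥K M]
    [IsScalarTower k ↥K M] [Module.Finite k M], MackeyAt k H L K Λ M

end Mackey


section Statements

variable [FiniteDimensional k H] [IsSemisimpleRing H]

/-- A `G`-grading on the fusion category `Rep(H^*)`, described via the
canonical bijection between simple objects of `Rep(H^*)` and simple
subcoalgebras of `H`: a degree function on simple subcoalgebras such that
every simple subcoalgebra of a product `C·D` (i.e. every simple constituent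
of the corresponding tensor product of comodules) has degree
`deg C · deg D`. -/
def IsGrading (G : Type) [Group G] (deg : Submodule k H → G) : Prop :=
  ∀ C D E : Submodule k H, IsSimpleSubcoalgebra k H C →
    IsSimpleSubcoalgebra k H D → IsSimpleSubcoalgebra k H E →
    E ≤ C * D → deg E = deg C * deg D

/-- For a subset `S ⊆ G`, the subcoalgebra `H(S)` of `H` spanned by the simple
subcoalgebras whose degree lies in `S`. -/
def Hgr (G : Type) [Group G] (deg : Submodule k H → G) (S : Set G) : Submodule k H :=
  sSup {C : Submodule k H | IsSimpleSubcoalgebra k H C ∧ deg C ∈ S}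

end Statements

end

end MackeyPaper

/-!
A finite-dimensional semisimple Hopf algebra `H` has an integral `Λ` with `ε Λ = 1`. The form
`h ↦ tr (x ↦ S² x * h)` is a right integral in the dual of `H`, and `H` is cosemisimple as soon as
the value `tr S²` of this form at `1` is nonzero. By Radford's formula `S⁴` is conjugation by a
group-like element, so the automorphism `S²` has finite order; it also fixes the centre of `H`.
Hence it acts on every simple block of `H` as conjugation by a matrix `u` of finite order, with
trace `|tr u|² ≥ 0`, and it acts trivially on the block of the counit, so that `tr S² ≠ 0`.

A cosemisimple `H` is the direct sum of its components `H_g`, `g ∈ G`, and `1 ∈ H_g H_{g⁻¹}`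
whenever `H_g ≠ 0`, because `∑ x₁ S(x₂) = ε(x)`. It follows that `C K = H (deg C · N)` for
`K = H(N)` and that the conjugate of `K` by `C` contains `H_t` for all `t ∈ deg C · N · (deg C)⁻¹`.
Writing `1 = ∑ aᵢ bᵢ` with `aᵢ ∈ H_n` and `bᵢ ∈ H_{n⁻¹}`, the inverse of `π_M` sends `h ⊗ m`, where
`h` has degree `n s` with `n ∈ M` and `s ∈ deg C · N`, to `∑ aᵢ ⊗ bᵢ h ⊗ m`.
-/

namespace MackeyPaper

noncomputable section

open Coalgebra HopfAlgebra

/-! ### Sweedler calculus -/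

section Linearity

attribute [fun_prop] IsLinearMap

variable {k U V W A : Type*} [CommRing k] [AddCommGroup U] [Module k U] [AddCommGroup V]
  [Module k V] [AddCommGroup W] [Module k W] [Ring A] [Algebra k A]

@[fun_prop]
lemma isLinearMap_id : IsLinearMap k (fun x : V => x) := ⟨fun _ _ => rfl, fun _ _ => rfl⟩

@[fun_prop]
lemma isLinearMap_comp {f : W → U} {g : V → W} (hf : IsLinearMap k f) (hg : IsLinearMap k g) :
    IsLinearMap k (fun x => f (g x)) :=
  ((hf.mk' f).comp (hg.mk' g)).isLinear

@[fun_prop]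
lemma isLinearMap_coe (f : V →ₗ[k] W) : IsLinearMap k (fun x => f x) := f.isLinear

@[fun_prop]
lemma isLinearMap_tmul_left {g : V → W} (hg : IsLinearMap k g) (u : U) :
    IsLinearMap k (fun x => g x ⊗ₜ[k] u) :=
  (((TensorProduct.mk k W U).flip u).comp (hg.mk' g)).isLinear

@[fun_prop]
lemma isLinearMap_tmul_right {g : V → W} (hg : IsLinearMap k g) (u : U) :
    IsLinearMap k (fun x => u ⊗ₜ[k] g x) :=
  ((TensorProduct.mk k U W u).comp (hg.mk' g)).isLinear

@[fun_prop]
lemma isLinearMap_smul_left {g : V → k} (hg : IsLinearMap k g) (u : U) :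
    IsLinearMap k (fun x => g x • u) :=
  ((LinearMap.toSpanSingleton k U u).comp (hg.mk' g)).isLinear

@[fun_prop]
lemma isLinearMap_smul_right {g : V → U} (hg : IsLinearMap k g) (c : k) :
    IsLinearMap k (fun x => c • g x) :=
  ((LinearMap.lsmul k U c).comp (hg.mk' g)).isLinear

@[fun_prop]
lemma isLinearMap_mul_left {g : V → A} (hg : IsLinearMap k g) (u : A) :
    IsLinearMap k (fun x => g x * u) :=
  ((LinearMap.mulRight k u).comp (hg.mk' g)).isLinear

@[fun_prop]
lemma isLinearMap_mul_right {g : V → A} (hg : IsLinearMap k g) (u : A) :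
    IsLinearMap k (fun x => u * g x) :=
  ((LinearMap.mulLeft k u).comp (hg.mk' g)).isLinear

lemma exists_bilinear {f : V → W → U} (h₁ : ∀ b, IsLinearMap k fun a => f a b := by fun_prop)
    (h₂ : ∀ a, IsLinearMap k fun b => f a b := by fun_prop) :
    ∃ F : V →ₗ[k] W →ₗ[k] U, f = fun a b => F a b :=
  ⟨LinearMap.mk₂ k f (fun _ _ _ => (h₁ _).map_add _ _) (fun _ _ _ => (h₁ _).map_smul _ _)
    (fun _ _ _ => (h₂ _).map_add _ _) (fun _ _ _ => (h₂ _).map_smul _ _), rfl⟩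

lemma ext_dual {k V : Type*} [Field k] [AddCommGroup V] [Module k V] {x y : V}
    (h : ∀ φ : V →ₗ[k] k, φ x = φ y) : x = y := by
  rw [← sub_eq_zero, ← Module.forall_dual_apply_eq_zero_iff k]
  intro φ
  rw [map_sub, h, sub_self]

end Linearity

section Sweedler

variable {k H U V W : Type*} [CommRing k] [Ring H] [HopfAlgebra k H] [AddCommGroup U] [Module k U]
  [AddCommGroup V] [AddCommGroup W] [Module k W]

local notation "ε" => counit (R := k) (A := H)
local notation "S" => antipode k (A := H)

variable (k) in
/-- The Sweedler sum `∑ f h₁ h₂` over an arbitrary presentation of the coproduct of `h`; it is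
independent of the presentation as soon as `f` is bilinear, see `sw_eq_sum`. -/
def sw (f : H → H → V) (h : H) : V := ∑ p ∈ (ℛ k h).index, f p.1 p.2

lemma sum_sw {ι : Type*} (s : Finset ι) (f : ι → H → H → V) (h : H) :
    ∑ i ∈ s, sw k (f i) h = sw k (fun a b => ∑ i ∈ s, f i a b) h :=
  Finset.sum_comm

variable [Module k V]

lemma map_sw {F : V → W} (f : H → H → V) (h : H) (hF : IsLinearMap k F := by fun_prop) :
    F (sw k f h) = sw k (fun a b => F (f a b)) h :=
  map_sum (hF.mk' F) _ _

lemma smul_sw (c : k) (f : H → H → V) (h : H) : c • sw k f h = sw k (fun a b => c • f a b) h :=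
  Finset.smul_sum

lemma sw_smul_const (f : H → H → k) (v : V) (h : H) :
    sw k f h • v = sw k (fun a b => f a b • v) h :=
  Finset.sum_smul

lemma mul_sw (c : H) (f : H → H → H) (h : H) : c * sw k f h = sw k (fun a b => c * f a b) h :=
  Finset.mul_sum _ _ _

lemma sw_tmul (h : H) : sw k (fun a b => a ⊗ₜ[k] b) h = comul h := (ℛ k h).eq

lemma sw_eq_lift (f : H →ₗ[k] H →ₗ[k] V) (h : H) :
    sw k (fun a b => f a b) h = TensorProduct.lift f (comul h) := by
  rw [← sw_tmul, map_sw (F := TensorProduct.lift f)]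
  rfl

lemma sw_eq_sum {f : H → H → V} (h : H) {ι : Type*} (s : Finset ι) (x y : ι → H)
    (hs : comul h = ∑ i ∈ s, x i ⊗ₜ[k] y i) (h₁ : ∀ b, IsLinearMap k fun a => f a b := by fun_prop)
    (h₂ : ∀ a, IsLinearMap k fun b => f a b := by fun_prop) :
    sw k f h = ∑ i ∈ s, f (x i) (y i) := by
  obtain ⟨F, rfl⟩ := exists_bilinear h₁ h₂
  simp [sw_eq_lift, hs]

@[fun_prop]
lemma isLinearMap_sw_fun {f : U → H → H → V} (hf : ∀ a b, IsLinearMap k (fun x => f x a b))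
    (h : H) : IsLinearMap k (fun x => sw k (f x) h) :=
  ⟨fun x y => by simp [sw, (hf _ _).map_add, Finset.sum_add_distrib],
    fun x y => by simp [sw, (hf _ _).map_smul, Finset.smul_sum]⟩

@[fun_prop]
lemma isLinearMap_sw_arg {f : H → H → V} (h₁ : ∀ b, IsLinearMap k (fun a => f a b))
    (h₂ : ∀ a, IsLinearMap k (fun b => f a b)) {g : U → H} (hg : IsLinearMap k g) :
    IsLinearMap k (fun x => sw k f (g x)) := by
  obtain ⟨F, rfl⟩ := exists_bilinear h₁ h₂
  simp only [sw_eq_lift]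
  fun_prop

lemma sw_smul {f : H → H → V} (c : k) (x : H)
    (h₁ : ∀ b, IsLinearMap k fun a => f a b := by fun_prop)
    (h₂ : ∀ a, IsLinearMap k fun b => f a b := by fun_prop) : sw k f (c • x) = c • sw k f x :=
  (isLinearMap_sw_arg h₁ h₂ isLinearMap_id).map_smul c x

lemma sw_assoc {t : H → H → H → V} (h : H)
    (h₁ : ∀ b c, IsLinearMap k (fun a => t a b c) := by fun_prop)
    (h₂ : ∀ a c, IsLinearMap k (fun b => t a b c) := by fun_prop)
    (h₃ : ∀ a b, IsLinearMap k (fun c => t a b c) := by fun_prop) :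
    sw k (fun x y => sw k (fun a b => t x a b) y) h =
      sw k (fun x y => sw k (fun a b => t a b y) x) h := by
  let T : H →ₗ[k] H →ₗ[k] H →ₗ[k] V :=
    { toFun := fun a => LinearMap.mk₂ k (t a) (fun _ _ _ => (h₂ _ _).map_add _ _)
        (fun _ _ _ => (h₂ _ _).map_smul _ _) (fun _ _ _ => (h₃ _ _).map_add _ _)
        (fun _ _ _ => (h₃ _ _).map_smul _ _)
      map_add' := fun x y => by ext; simp [(h₁ _ _).map_add]
      map_smul' := fun x y => by ext; simp [(h₁ _ _).map_smul] }
  have key := congrArg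
    (TensorProduct.lift ((TensorProduct.lift.equiv (.id k) H H V).toLinearMap ∘ₗ T))
    (sum_tmul_tmul_eq (ℛ k h) (fun i => ℛ k _) (fun i => ℛ k _))
  simp only [map_sum] at key
  exact key.symm

lemma sw_counit_left {f : H → V} (h : H) (hf : IsLinearMap k f := by fun_prop) :
    sw k (fun a b => ε a • f b) h = f h := by
  have := congrArg (hf.mk' f) (sum_counit_smul (ℛ k h))
  simp only [map_sum, map_smul] at this
  exact this

lemma sw_counit_right {f : H → V} (h : H) (hf : IsLinearMap k f := by fun_prop) :
    sw k (fun a b => ε b • f a) h = f h := by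
  have := congrArg (TensorProduct.lift ((LinearMap.lsmul k V).flip ∘ₗ hf.mk' f))
    (sum_tmul_counit_eq (ℛ k h))
  simp only [map_sum, TensorProduct.lift.tmul, LinearMap.comp_apply, LinearMap.flip_apply,
    LinearMap.lsmul_apply, one_smul, IsLinearMap.mk'_apply] at this
  exact this

lemma sw_antipode_mul {f : H → V} (h : H) (hf : IsLinearMap k f := by fun_prop) :
    sw k (fun a b => f (S a * b)) h = ε h • f 1 := by
  have := congrArg (hf.mk' f) (sum_antipode_mul_eq_smul (ℛ k h))
  rwa [map_sum, map_smul] at this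

lemma sw_mul_antipode {f : H → V} (h : H) (hf : IsLinearMap k f := by fun_prop) :
    sw k (fun a b => f (a * S b)) h = ε h • f 1 := by
  have := congrArg (hf.mk' f) (sum_mul_antipode_eq_smul (ℛ k h))
  rwa [map_sum, map_smul] at this

lemma sw_mul {f : H → H → V} (x y : H) (h₁ : ∀ b, IsLinearMap k fun a => f a b := by fun_prop)
    (h₂ : ∀ a, IsLinearMap k fun b => f a b := by fun_prop) :
    sw k f (x * y) = sw k (fun a b => sw k (fun c d => f (a * c) (b * d)) y) x := by
  rw [sw_eq_sum (x * y) ((ℛ k x).index ×ˢ (ℛ k y).index)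
    (fun p => p.1.1 * p.2.1) (fun p => p.1.2 * p.2.2), Finset.sum_product]
  · rfl
  · rw [Bialgebra.comul_mul, ← (ℛ k x).eq, ← (ℛ k y).eq, Finset.sum_mul_sum, Finset.sum_product]
    simp only [Algebra.TensorProduct.tmul_mul_tmul]
    rfl

lemma sw_of_isGroupLikeElem {f : H → H → V} {g : H} (hg : IsGroupLikeElem k g)
    (h₁ : ∀ b, IsLinearMap k fun a => f a b := by fun_prop)
    (h₂ : ∀ a, IsLinearMap k fun b => f a b := by fun_prop) : sw k f g = f g g := by
  rw [sw_eq_sum g {()} (fun _ => g) (fun _ => g) (by simpa using hg.comul_eq_tmul_self)]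
  simp

lemma comul_antipode (x : H) :
    comul (R := k) (S x) = sw k (fun a b => S b ⊗ₜ[k] S a) x := by
  -- In the convolution algebra `Hom(H, H ⊗ H)` both sides are inverse to `Δ = i₁ * i₂`.
  let i₁ : H →ₐ[k] H ⊗[k] H := Algebra.TensorProduct.includeLeft
  let i₂ : H →ₐ[k] H ⊗[k] H := Algebra.TensorProduct.includeRight
  let F : (H →ₐ[k] H ⊗[k] H) → (H →ₗ[k] H) → WithConv (H →ₗ[k] H ⊗[k] H) :=
    fun i f => WithConv.toConv (i.toLinearMap ∘ₗ f)
  have antipode_mul_id (i) : F i S * F i .id = 1 := by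
    have h := LinearMap.algHom_comp_convMul_distrib i (WithConv.toConv S)
      (WithConv.toConv (.id : H →ₗ[k] H))
    rw [LinearMap.antipode_mul_id] at h
    refine WithConv.ext (h.symm.trans ?_)
    ext y
    simp [LinearMap.convOne_def]
  have mul_eq_comul : F i₁ .id * F i₂ .id = WithConv.toConv (comul (R := k)) := by
    ext y
    rw [(ℛ k y).convMul_apply]
    simp [F, i₁, i₂, (ℛ k y).eq]
  have left_inv : (F i₂ S * F i₁ S) * WithConv.toConv (comul (R := k)) = 1 := by
    rw [← mul_eq_comul, mul_assoc, ← mul_assoc (F i₁ _), antipode_mul_id, one_mul, antipode_mul_id]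
  have h := congrArg (fun f => f.ofConv x) (left_inv_eq_right_inv left_inv
    LinearMap.comul_right_inv)
  have mul_apply (a b : H) : (F i₂ S).ofConv a * (F i₁ S).ofConv b = S b ⊗ₜ[k] S a := by
    simp [F, i₁, i₂]
  refine h.symm.trans ?_
  rw [(ℛ k x).convMul_apply]
  exact Finset.sum_congr rfl fun p _ => mul_apply p.1 p.2

lemma sw_antipode {f : H → H → V} (x : H) (h₁ : ∀ b, IsLinearMap k fun a => f a b := by fun_prop)
    (h₂ : ∀ a, IsLinearMap k fun b => f a b := by fun_prop) :
    sw k f (S x) = sw k (fun a b => f (S b) (S a)) x := by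
  obtain ⟨F, rfl⟩ := exists_bilinear h₁ h₂
  rw [sw_eq_lift, comul_antipode, map_sw (F := TensorProduct.lift F)]
  rfl

end Sweedler

section Hit

variable {k H V : Type*} [CommRing k] [Ring H] [HopfAlgebra k H] [AddCommGroup V] [Module k V]

/-- The left hit action `φ ⇀ h = ∑ φ(h₂) h₁` of a functional on `H`. -/
def hitL (φ : H →ₗ[k] k) : H →ₗ[k] H := (TensorProduct.rid k H).toLinearMap ∘ₗ φ.lTensor H ∘ₗ comul

/-- The right hit action `h ↼ φ = ∑ φ(h₁) h₂` of a functional on `H`. -/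
def hitR (φ : H →ₗ[k] k) : H →ₗ[k] H := (TensorProduct.lid k H).toLinearMap ∘ₗ φ.rTensor H ∘ₗ comul

lemma hitL_apply (φ : H →ₗ[k] k) (h : H) : hitL φ h = sw k (fun a b => φ b • a) h := by
  rw [hitL, LinearMap.comp_apply, LinearMap.comp_apply, ← sw_tmul,
    map_sw (F := fun t => (TensorProduct.rid k H).toLinearMap (φ.lTensor H t))]
  simp

lemma hitR_apply (φ : H →ₗ[k] k) (h : H) : hitR φ h = sw k (fun a b => φ a • b) h := by
  rw [hitR, LinearMap.comp_apply, LinearMap.comp_apply, ← sw_tmul,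
    map_sw (F := fun t => (TensorProduct.lid k H).toLinearMap (φ.rTensor H t))]
  simp

lemma hitL_hitR (φ ψ : H →ₗ[k] k) (h : H) : hitL φ (hitR ψ h) = hitR ψ (hitL φ h) := by
  rw [hitR_apply, map_sw (F := hitL φ), hitL_apply φ h, map_sw (F := hitR ψ)]
  simp only [map_smul, hitL_apply, hitR_apply, smul_sw]
  rw [sw_assoc (t := fun x a b => ψ x • φ b • a)]
  simp only [smul_comm (ψ _)]

end Hit

/-! ### Integrals and the trace form of the square of the antipode -/

section Integrals

variable {k H V : Type*} [CommRing k] [Ring H] [HopfAlgebra k H] [AddCommGroup V] [Module k V]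

local notation "ε" => counit (R := k) (A := H)
local notation "S" => antipode k (A := H)

lemma exists_left_integral {A : Type*} [Ring A] [Algebra k A] [IsSemisimpleRing A]
    (e : A →ₐ[k] k) : ∃ Λ : A, e Λ = 1 ∧ ∀ h, h * Λ = e h • Λ := by
  obtain ⟨J, hJ⟩ := exists_isCompl (RingHom.ker e : Submodule A A)
  obtain ⟨i, hi, Λ, hΛ, hiΛ⟩ :=
    Submodule.mem_sup.1 (hJ.sup_eq_top ▸ Submodule.mem_top (x := (1 : A)))
  have hi0 : e i = 0 := hi
  have hΛ1 : e Λ = 1 := by rw [← map_one e, ← hiΛ, map_add, hi0, zero_add]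
  refine ⟨Λ, hΛ1, fun h => sub_eq_zero.1 ?_⟩
  have mem_compl : h * Λ - e h • Λ ∈ J := by
    rw [Algebra.smul_def]
    exact J.sub_mem (J.smul_mem h hΛ) (J.smul_mem _ hΛ)
  have mem_ker : h * Λ - e h • Λ ∈ RingHom.ker e := by simp [RingHom.mem_ker, hΛ1]
  exact (Submodule.mem_bot A).1 (hJ.inf_eq_bot ▸ Submodule.mem_inf.2 ⟨mem_ker, mem_compl⟩)

variable (k) in
/-- `Λ` is a two-sided integral of `H`, normalised by `ε(Λ) = 1`. -/
structure IsNormalizedIntegral (Λ : H) : Prop where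
  counit : ε Λ = 1
  mul_left : ∀ h, h * Λ = ε h • Λ
  mul_right : ∀ h, Λ * h = ε h • Λ

variable (k H) in
lemma exists_isNormalizedIntegral [IsSemisimpleRing H] : ∃ Λ : H, IsNormalizedIntegral k Λ := by
  obtain ⟨Λ, hΛ1, hΛ⟩ := exists_left_integral (Bialgebra.counitAlgHom k H)
  obtain ⟨Λ', hΛ'1, hΛ'⟩ := exists_left_integral
    (AlgHom.fromOpposite (Bialgebra.counitAlgHom k H) fun _ _ => Commute.all _ _)
  have mul_right (h : H) : Λ'.unop * h = ε h • Λ'.unop :=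
    congrArg MulOpposite.unop (hΛ' (MulOpposite.op h))
  have hΛ1 : ε Λ = 1 := hΛ1
  have hΛ'1 : ε Λ'.unop = 1 := hΛ'1
  have unop_eq : Λ'.unop = Λ := by
    have h := hΛ Λ'.unop
    rw [mul_right] at h
    simpa [hΛ1, hΛ'1] using h
  exact ⟨Λ, hΛ1, hΛ, unop_eq ▸ mul_right⟩

lemma sw_mul_integral {f : H → H → V} {Λ : H} (hΛ : ∀ h, h * Λ = ε h • Λ) (h : H)
    (h₁ : ∀ b, IsLinearMap k fun a => f a b := by fun_prop)
    (h₂ : ∀ a, IsLinearMap k fun b => f a b := by fun_prop) :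
    sw k (fun a b => f (h * a) (S b)) Λ = sw k (fun a b => f a (S b * h)) Λ := by
  obtain ⟨F, rfl⟩ := exists_bilinear h₁ h₂
  have expand_mul (x y : H) : sw k (fun a b => F a (S b * y)) (x * Λ) =
      sw k (fun p q => sw k (fun a b => F (p * a) (S b * (S q * y))) Λ) x := by
    rw [sw_mul]
    simp only [antipode_mul_antidistrib, mul_assoc]
  have cancel (x y : H) : sw k (fun q y => sw k (fun a b => F (x * a) (S b * (S q * y))) Λ) y =
      ε y • sw k (fun a b => F (x * a) (S b)) Λ := by
    rw [sw_antipode_mul (f := fun z => sw k (fun a b => F (x * a) (S b * z)) Λ)]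
    simp only [mul_one]
  calc sw k (fun a b => F (h * a) (S b)) Λ
      = sw k (fun x y => sw k (fun a b => F a (S b * y)) (x * Λ)) h := by
        simp only [expand_mul]
        rw [← sw_assoc (t := fun p q y => sw k (fun a b => F (p * a) (S b * (S q * y))) Λ)]
        simp only [cancel]
        rw [sw_counit_right (f := fun x => sw k (fun a b => F (x * a) (S b)) Λ)]
    _ = sw k (fun x y => ε x • sw k (fun a b => F a (S b * y)) Λ) h := by
        congr! 3 with x y
        rw [hΛ, sw_smul]
    _ = sw k (fun a b => F a (S b * h)) Λ :=
        sw_counit_left (f := fun h => sw k (fun a b => F a (S b * h)) Λ) h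

end Integrals

section TraceForm

variable {k H V : Type*} [Field k] [Ring H] [HopfAlgebra k H] [AddCommGroup V] [Module k V]

local notation "ε" => counit (R := k) (A := H)
local notation "S" => antipode k (A := H)

variable (k) in
/-- The trace form `h ↦ Tr(x ↦ S²(x) h)`; it is a right integral in `H^*` and its value at `1` is
`Tr(S²)`. -/
def trInt : H →ₗ[k] k :=
  LinearMap.trace k H ∘ₗ LinearMap.lcomp k H (S ∘ₗ S) ∘ₗ (LinearMap.mul k H).flip

local notation "ρ" => trInt k (H := H)

lemma trInt_apply (h : H) : ρ h = LinearMap.trace k H (LinearMap.mulRight k h ∘ₗ S ∘ₗ S) := rfl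

lemma trInt_one : ρ 1 = LinearMap.trace k H (S ∘ₗ S) := by
  rw [trInt_apply, LinearMap.mulRight_one, LinearMap.id_comp]

lemma sum_hitL_coord {ι : Type*} [Fintype ι] (b : Module.Basis ι k H) {f : H → H → V} (x : H)
    (h₁ : ∀ c, IsLinearMap k fun a => f a c := by fun_prop)
    (h₂ : ∀ a, IsLinearMap k fun c => f a c := by fun_prop) :
    ∑ j, f (hitL (b.coord j) x) (b j) = sw k f x := by
  obtain ⟨F, rfl⟩ := exists_bilinear h₁ h₂
  have term (j : ι) : F (hitL (b.coord j) x) (b j) =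
      sw k (fun a c => F a (b.coord j c • b j)) x := by
    rw [hitL_apply, map_sw (F := fun y => F y (b j))]
    simp only [map_smul, LinearMap.smul_apply]
  simp only [term, sum_sw, ← map_sum, Module.Basis.coord_apply, b.sum_repr]

variable {ι : Type*} [Fintype ι]

lemma sum_hitL_comp_mulRight (b : Module.Basis ι k H) (φ : H →ₗ[k] k) (h : H) :
    ∑ j, hitL (φ ∘ₗ LinearMap.mulLeft k (S (b j))) ∘ₗ (LinearMap.mulRight k h ∘ₗ S ∘ₗ S) ∘ₗ
      hitL (b.coord j) = LinearMap.mulRight k (hitL φ h) ∘ₗ S ∘ₗ S := by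
  ext x
  have expand (y z : H) : sw k (fun a c => φ (S z * c) • a) (S (S y) * h) =
      sw k (fun p q => sw k (fun a c => φ (S (S q * z) * c) • (S (S p) * a)) h) y := by
    rw [sw_mul, sw_antipode, sw_antipode]
    simp only [antipode_mul_antidistrib, mul_assoc]
  have cancel (p y : H) :
      sw k (fun q z => sw k (fun a c => φ (S (S q * z) * c) • (S (S p) * a)) h) y =
        ε y • sw k (fun a c => φ c • (S (S p) * a)) h := by
    rw [sw_antipode_mul (f := fun t => sw k (fun a c => φ (S t * c) • (S (S p) * a)) h)]
    simp only [antipode_one, one_mul]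
  simp only [LinearMap.sum_apply, LinearMap.comp_apply, LinearMap.mulRight_apply, hitL_apply φ,
    hitL_apply (φ ∘ₗ _), LinearMap.mulLeft_apply]
  rw [sum_hitL_coord b (f := fun y z => sw k (fun a c => φ (S z * c) • a) (S (S y) * h))]
  simp only [expand]
  rw [← sw_assoc (t := fun p q z => sw k (fun a c => φ (S (S q * z) * c) • (S (S p) * a)) h)]
  simp only [cancel]
  rw [sw_counit_right (f := fun p => sw k (fun a c => φ c • (S (S p) * a)) h),
    map_sw (F := fun y => S (S x) * y)]
  simp only [mul_smul_comm]

lemma sum_hitL_comp_hitL (b : Module.Basis ι k H) (φ : H →ₗ[k] k) :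
    ∑ j, hitL (b.coord j) ∘ₗ hitL (φ ∘ₗ LinearMap.mulLeft k (S (b j))) = φ 1 • LinearMap.id := by
  ext y
  have cancel (x y : H) : sw k (fun z c => φ (S z * c) • x) y = ε y • φ 1 • x :=
    sw_antipode_mul (f := fun t => φ t • x) y
  have term (j : ι) : hitL (b.coord j) (hitL (φ ∘ₗ LinearMap.mulLeft k (S (b j))) y) =
      sw k (fun a c => φ (S (b j) * c) • hitL (b.coord j) a) y := by
    rw [hitL_apply (φ ∘ₗ _), map_sw (F := hitL (b.coord j))]
    simp only [map_smul, LinearMap.comp_apply, LinearMap.mulLeft_apply]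
  simp only [LinearMap.sum_apply, LinearMap.comp_apply, term, sum_sw]
  simp only [fun a c => sum_hitL_coord b (f := fun p z => φ (S z * c) • p) a]
  rw [← sw_assoc (t := fun p z c => φ (S z * c) • p)]
  simp only [cancel]
  exact sw_counit_right (f := fun x => φ 1 • x) y

lemma trInt_hitL [FiniteDimensional k H] (φ : H →ₗ[k] k) (h : H) : ρ (hitL φ h) = φ 1 • ρ h := by
  let b := Module.finBasis k H
  let F := LinearMap.mulRight k h ∘ₗ S ∘ₗ S
  let Q (j) : H →ₗ[k] H := hitL (φ ∘ₗ LinearMap.mulLeft k (S (b j)))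
  calc ρ (hitL φ h) = ∑ j, LinearMap.trace k H (Q j ∘ₗ F ∘ₗ hitL (b.coord j)) := by
        rw [trInt_apply, ← sum_hitL_comp_mulRight b, map_sum]
    _ = ∑ j, LinearMap.trace k H ((hitL (b.coord j) ∘ₗ Q j) ∘ₗ F) := by
        refine Finset.sum_congr rfl fun j _ => ?_
        rw [← LinearMap.comp_assoc, LinearMap.trace_comp_comm', LinearMap.comp_assoc]
    _ = LinearMap.trace k H ((∑ j, hitL (b.coord j) ∘ₗ Q j) ∘ₗ F) := by
        rw [← map_sum]
        congr 1
        ext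
        simp only [LinearMap.sum_apply, LinearMap.comp_apply]
    _ = φ 1 • ρ h := by
        rw [sum_hitL_comp_hitL, LinearMap.smul_comp, LinearMap.id_comp, map_smul, trInt_apply]

lemma trInt_mul_comm [FiniteDimensional k H] (x y : H) : ρ (x * y) = ρ (S (S y) * x) := by
  have mulRight_mul : LinearMap.mulRight k (x * y) ∘ₗ S ∘ₗ S =
      LinearMap.mulRight k y ∘ₗ (LinearMap.mulRight k x ∘ₗ S ∘ₗ S) := by
    ext z; simp [mul_assoc]
  have mulRight_antipode_mul : LinearMap.mulRight k (S (S y) * x) ∘ₗ S ∘ₗ S =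
      (LinearMap.mulRight k x ∘ₗ S ∘ₗ S) ∘ₗ LinearMap.mulRight k y := by
    ext z; simp [mul_assoc, antipode_mul_antidistrib]
  rw [trInt_apply, trInt_apply, mulRight_mul, mulRight_antipode_mul, LinearMap.trace_comp_comm']

variable (k) in
/-- `τ` is a right integral in the dual of `H`. -/
def IsRightIntegral (τ : H →ₗ[k] k) : Prop := ∀ h, hitR τ h = τ h • 1

lemma IsRightIntegral.smul {τ : H →ₗ[k] k} (hτ : IsRightIntegral k τ) (c : k) :
    IsRightIntegral k (c • τ) := fun h => by
  simp only [hitR_apply, LinearMap.smul_apply, smul_assoc]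
  rw [← hτ, hitR_apply, smul_sw]

lemma isRightIntegral_trInt [FiniteDimensional k H] : IsRightIntegral k ρ := fun h => by
  refine ext_dual (k := k) fun φ => ?_
  have hφ := trInt_hitL φ h
  rw [hitL_apply, map_sw (F := ρ)] at hφ
  rw [hitR_apply, map_sw (F := φ), map_smul, smul_eq_mul, mul_comm, ← smul_eq_mul, ← hφ]
  simp only [map_smul, smul_eq_mul, mul_comm]

end TraceForm

/-! ### Radford's formula for the fourth power of the antipode -/

section Radford

variable {k H : Type*} [Field k] [Ring H] [HopfAlgebra k H]

local notation "ε" => counit (R := k) (A := H)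
local notation "S" => antipode k (A := H)
local notation "ρ" => trInt k (H := H)

variable {Λ : H} (hΛ : IsNormalizedIntegral k Λ)
include hΛ

lemma IsNormalizedIntegral.trInt_eq_one [FiniteDimensional k H] : ρ Λ = 1 := by
  have h : LinearMap.mulRight k Λ ∘ₗ S ∘ₗ S = LinearMap.smulRight ε Λ := by
    ext z; simp [hΛ.mul_left]
  rw [trInt_apply, h, LinearMap.trace_smulRight, hΛ.counit]

lemma sw_isRightIntegral_mul {τ : H →ₗ[k] k} (hτ : IsRightIntegral k τ) (h : H) :
    sw k (fun a b => τ (h * a) • S b) Λ = τ Λ • h := by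
  have hτΛ := hτ Λ
  rw [hitR_apply] at hτΛ
  rw [sw_mul_integral (f := fun a b => τ a • b) hΛ.mul_left]
  simp only [← smul_mul_assoc, ← map_smul]
  rw [← map_sw (F := fun x => S x * h), hτΛ, map_smul, antipode_one, smul_one_mul]

variable [FiniteDimensional k H]

lemma sw_trInt_mul (h : H) : sw k (fun a b => ρ (h * a) • S b) Λ = h := by
  rw [sw_isRightIntegral_mul hΛ isRightIntegral_trInt, hΛ.trInt_eq_one, one_smul]

lemma eq_of_trInt_mul {x y : H} (h : ∀ z, ρ (x * z) = ρ (y * z)) : x = y := by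
  rw [← sw_trInt_mul hΛ x, ← sw_trInt_mul hΛ y]
  simp only [h]

lemma antipode_antipode_eq_self_of_mem_center {z : H} (hz : z ∈ Subalgebra.center k H) :
    S (S z) = z := by
  refine eq_of_trInt_mul hΛ fun x => ?_
  rw [← trInt_mul_comm, ← Subalgebra.mem_center_iff.1 hz x]

lemma antipode_surjective : Function.Surjective S := fun h =>
  ⟨sw k (fun a b => ρ (h * a) • b) Λ, by
    rw [map_sw (F := S)]
    simpa only [map_smul] using sw_trInt_mul hΛ h⟩

lemma antipode_injective : Function.Injective S :=
  LinearMap.injective_iff_surjective.2 (antipode_surjective hΛ)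

lemma antipode_integral : S Λ = Λ := by
  have mul_right (y : H) : S Λ * y = ε y • S Λ := by
    obtain ⟨x, rfl⟩ := antipode_surjective hΛ y
    rw [← antipode_mul_antidistrib, hΛ.mul_left, map_smul, counit_antipode]
  have h := mul_right Λ
  rw [hΛ.mul_left, hΛ.counit, counit_antipode, hΛ.counit, one_smul, one_smul] at h
  exact h.symm

lemma IsRightIntegral.eq_smul {τ : H →ₗ[k] k} (hτ : IsRightIntegral k τ) : τ = τ Λ • ρ := by
  let Θ : (H →ₗ[k] k) →ₗ[k] H := IsLinearMap.mk' (fun f => sw k (fun a b => f a • S b) Λ)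
    (isLinearMap_sw_fun (fun a b => ⟨fun _ _ => by simp [add_smul], fun _ _ => by simp [mul_smul]⟩)
      _)
  have surjective : Function.Surjective Θ := fun h =>
    ⟨ρ ∘ₗ LinearMap.mulLeft k h, sw_trInt_mul hΛ h⟩
  have injective : Function.Injective Θ :=
    (LinearMap.injective_iff_surjective_of_finrank_eq_finrank
      (Subspace.dual_finrank_eq (K := k) (V := H))).2 surjective
  have apply_eq {σ : H →ₗ[k] k} (hσ : IsRightIntegral k σ) : Θ σ = σ Λ • 1 := by
    have h := sw_isRightIntegral_mul hΛ hσ 1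
    simp only [one_mul] at h
    exact h
  apply injective
  rw [map_smul, apply_eq hτ, apply_eq isRightIntegral_trInt, hΛ.trInt_eq_one, one_smul]

lemma hitL_trInt (h : H) : hitL ρ h = ρ h • hitL ρ Λ := by
  refine ext_dual (k := k) fun f => ?_
  have isRightIntegral : IsRightIntegral k (f ∘ₗ hitL ρ) := fun h => by
    have expand (x c : H) : (f ∘ₗ hitL ρ) x • c = sw k (fun a b => f a • ρ b • c) x := by
      rw [LinearMap.comp_apply, hitL_apply, map_sw (F := fun y => f y • c)]
      simp only [map_smul, smul_eq_mul, mul_comm, mul_smul]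
    calc hitR (f ∘ₗ hitL ρ) h = sw k (fun a y => f a • hitR ρ y) h := by
          simp only [hitR_apply, expand, smul_sw]
          rw [sw_assoc (t := fun a b c => f a • ρ b • c)]
      _ = (f ∘ₗ hitL ρ) h • 1 := by simp only [isRightIntegral_trInt _, expand]
  have := LinearMap.congr_fun (isRightIntegral.eq_smul hΛ) h
  rw [map_smul, smul_eq_mul, mul_comm]
  exact this

lemma isGroupLikeElem_hitL_trInt : IsGroupLikeElem k (hitL ρ Λ) where
  counit_eq_one := by
    have h := sw_counit_left (k := k) (f := ρ) Λ
    rw [hitL_apply, map_sw (F := ε), ← hΛ.trInt_eq_one, ← h]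
    simp only [map_smul, smul_eq_mul, mul_comm]
  comul_eq_tmul_self := by
    have hit (p y : H) : sw k (fun q b => ρ b • (p ⊗ₜ[k] q)) y = (ρ y • p) ⊗ₜ[k] hitL ρ Λ := by
      rw [smul_tmul, ← hitL_trInt hΛ, hitL_apply, map_sw (F := fun t => p ⊗ₜ[k] t)]
      simp only [tmul_smul]
    calc comul (hitL ρ Λ)
        = sw k (fun x b => sw k (fun p q => ρ b • (p ⊗ₜ[k] q)) x) Λ := by
          rw [hitL_apply, map_sw (F := comul)]
          simp only [map_smul, ← sw_tmul, smul_sw]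
      _ = sw k (fun p y => (ρ y • p) ⊗ₜ[k] hitL ρ Λ) Λ := by
          rw [← sw_assoc (t := fun p q b => ρ b • (p ⊗ₜ[k] q))]
          simp only [hit]
      _ = hitL ρ Λ ⊗ₜ[k] hitL ρ Λ := by
          rw [← map_sw (F := fun t => t ⊗ₜ[k] hitL ρ Λ), ← hitL_apply]

lemma isRightIntegral_comp_antipode {τ : H →ₗ[k] k} (hτ : ∀ h, hitL τ h = τ h • 1) :
    IsRightIntegral k (τ ∘ₗ S) := fun x => by
  apply antipode_injective hΛ
  rw [hitR_apply, map_sw (F := S), map_smul, antipode_one, LinearMap.comp_apply, ← hτ (S x),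
    hitL_apply, sw_antipode]
  simp only [map_smul, LinearMap.comp_apply]

lemma trInt_antipode_mul_hitL (x : H) : ρ (S x * hitL ρ Λ) = ρ x := by
  set g := hitL ρ Λ with hg
  have g_group : IsGroupLikeElem k g := isGroupLikeElem_hitL_trInt hΛ
  let τ : H →ₗ[k] k := ρ ∘ₗ LinearMap.mulRight k g
  have isLeftIntegral (h : H) : hitL τ h = τ h • 1 := by
    have hmul : sw k (fun a b => ρ (b * g) • (a * g)) h = ρ (h * g) • g := by
      rw [hg, ← hitL_trInt hΛ, ← hg, hitL_apply, sw_mul]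
      congr! 3 with a b
      rw [sw_of_isGroupLikeElem g_group]
    calc hitL τ h = sw k (fun a b => ρ (b * g) • (a * g)) h * S g := by
          rw [hitL_apply, map_sw (k := k) (F := fun y => y * S g)]
          simp only [smul_mul_assoc, mul_assoc, g_group.mul_antipode_cancel, mul_one]
          rfl
      _ = τ h • 1 := by
          rw [hmul, smul_mul_assoc, g_group.mul_antipode_cancel]
          rfl
  have h := LinearMap.congr_fun ((isRightIntegral_comp_antipode hΛ isLeftIntegral).eq_smul hΛ) x
  simpa [τ, antipode_integral hΛ, hΛ.mul_right, g_group.counit_eq_one, hΛ.trInt_eq_one] using h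

lemma antipode_pow_four_mul_hitL (x : H) : S (S (S (S x))) * hitL ρ Λ = hitL ρ Λ * x := by
  set g := hitL ρ Λ
  have g_group : IsGroupLikeElem k g := isGroupLikeElem_hitL_trInt hΛ
  have g_mul_inv : g * S g = 1 := g_group.mul_antipode_cancel
  have g_inv_mul : S g * g = 1 := g_group.antipode_mul_cancel
  have g_inv_inv : S (S g) = g := g_group.antipode_antipode
  have trInt_S (y : H) : ρ (S y * g) = ρ y := trInt_antipode_mul_hitL hΛ y
  have conj : S g * S (S (S (S x))) * g = x := by
    refine eq_of_trInt_mul hΛ fun y => Eq.symm ?_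
    calc ρ (x * y) = ρ (S y * (S x * g)) := by
          rw [← trInt_S (x * y), antipode_mul_antidistrib, mul_assoc]
      _ = ρ (S (g * y * S g * S (S x)) * g) := by
          rw [trInt_mul_comm]
          simp only [antipode_mul_antidistrib, g_inv_inv, mul_assoc, g_inv_mul, mul_one]
      _ = ρ (g * y * (S g * S (S x))) := by rw [trInt_S, mul_assoc (g * y)]
      _ = ρ (S g * S (S (S (S x))) * g * y) := by
          rw [trInt_mul_comm]
          simp only [antipode_mul_antidistrib, g_inv_inv, mul_assoc]
  calc S (S (S (S x))) * g = g * (S g * S (S (S (S x))) * g) := by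
        rw [← mul_assoc, ← mul_assoc, g_mul_inv, one_mul]
    _ = g * x := by rw [conj]

lemma isOfFinOrder_antipode_comp_antipode : IsOfFinOrder (S ∘ₗ S : Module.End k H) := by
  have finOrder : IsOfFinOrder (hitL ρ Λ) := by
    have : Finite (GroupLike k H) := linearIndep_groupLikeVal.finite
    exact (GroupLike.valMonoidHom k H).isOfFinOrder
      (isOfFinOrder_of_finite (⟨_, isGroupLikeElem_hitL_trInt hΛ⟩ : GroupLike k H))
  obtain ⟨n, hn, hgn⟩ := isOfFinOrder_iff_pow_eq_one.1 finOrder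
  have conj (m : ℕ) (x : H) :
      ((S ∘ₗ S : Module.End k H) ^ (2 * m)) x * hitL ρ Λ ^ m = hitL ρ Λ ^ m * x := by
    induction m generalizing x with
    | zero => simp
    | succ m ih =>
      rw [mul_add, pow_add, Module.End.mul_apply, pow_succ (hitL ρ Λ), ← mul_assoc, ih, mul_assoc,
        mul_assoc]
      exact congrArg (hitL ρ Λ ^ m * ·) (antipode_pow_four_mul_hitL hΛ x)
  refine isOfFinOrder_iff_pow_eq_one.2 ⟨2 * n, by omega, ?_⟩
  ext x
  simpa [hgn] using conj n x

end Radford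

/-! ### Traces of automorphisms of finite order -/

section Trace

variable {k V : Type*} [Field k] [AddCommGroup V] [Module k V]

lemma pow_apply_of_mem_eigenspace {u : Module.End k V} {μ : k} {x : V} (hx : x ∈ u.eigenspace μ)
    (j : ℕ) : (u ^ j) x = μ ^ j • x := by
  induction j with
  | zero => simp
  | succ j ih =>
    rw [pow_succ', Module.End.mul_apply, ih, map_smul, Module.End.mem_eigenspace_iff.1 hx,
      smul_smul, pow_succ]

variable [FiniteDimensional k V]

lemma trace_mulLeft_comp_mulRight (u w : Module.End k V) :
    LinearMap.trace k (Module.End k V) (LinearMap.mulLeft k u ∘ₗ LinearMap.mulRight k w) =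
      LinearMap.trace k V u * LinearMap.trace k V w := by
  have conj : LinearMap.mulLeft k u ∘ₗ LinearMap.mulRight k w =
      (dualTensorHomEquiv k V V).conj (TensorProduct.map (Module.Dual.transpose w) u) := by
    rw [LinearEquiv.conj_apply, LinearEquiv.eq_comp_toLinearMap_symm]
    ext f v x
    simp [Module.Dual.transpose]
  rw [conj]
  refine (LinearMap.trace_conj' (M := Module.Dual k V ⊗[k] V) (N := V →ₗ[k] V) _ _).trans ?_
  rw [LinearMap.trace_tensorProduct', LinearMap.trace_transpose', mul_comm]

variable [IsAlgClosed k]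

lemma exists_trace_pow_eq_sum [CharZero k] {u : Module.End k V} {n : ℕ} (hn : n ≠ 0)
    (hu : u ^ n = 1) :
    ∃ (s : Finset k) (m : k → ℕ), (∀ μ ∈ s, μ ^ n = 1) ∧
      ∀ j, LinearMap.trace k V (u ^ j) = ∑ μ ∈ s, m μ * μ ^ j := by
  classical
  have separable : (Polynomial.X ^ n - 1 : Polynomial k).Separable :=
    Polynomial.X_pow_sub_one_separable_iff.2 (by exact_mod_cast hn)
  have semisimple : u.IsSemisimple := Module.End.isSemisimple_of_squarefree_aeval_eq_zero
    separable.squarefree (by simp [hu])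
  have internal : DirectSum.IsInternal (fun μ => u.eigenspace μ) := by
    rw [DirectSum.isInternal_submodule_iff_iSupIndep_and_iSup_eq_top]
    exact ⟨u.eigenspaces_iSupIndep, semisimple.iSup_eigenspace_eq_top⟩
  have finite : {μ | u.eigenspace μ ≠ ⊥}.Finite :=
    WellFoundedGT.finite_ne_bot_of_iSupIndep internal.submodule_iSupIndep
  refine ⟨finite.toFinset, fun μ => Module.finrank k (u.eigenspace μ), fun μ hμ => ?_, fun j => ?_⟩
  · obtain ⟨x, hx, hx0⟩ := Submodule.exists_mem_ne_zero_of_ne_bot (by simpa using hμ)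
    have hμx : μ ^ n • x = (1 : k) • x := by
      rw [← pow_apply_of_mem_eigenspace hx, hu, Module.End.one_apply, one_smul]
    exact smul_left_injective k hx0 hμx
  · have mapsTo (μ : k) : Set.MapsTo (u ^ j) (u.eigenspace μ) (u.eigenspace μ) := fun x hx => by
      rw [SetLike.mem_coe, pow_apply_of_mem_eigenspace hx]
      exact Submodule.smul_mem _ _ hx
    have restrict_eq (μ : k) : (u ^ j).restrict (mapsTo μ) = μ ^ j • 1 := by
      ext x
      exact pow_apply_of_mem_eigenspace x.2 j
    rw [LinearMap.trace_eq_sum_trace_restrict' internal finite mapsTo]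
    refine Finset.sum_congr rfl fun μ _ => ?_
    rw [restrict_eq, map_smul, LinearMap.trace_one, smul_eq_mul, mul_comm]

lemma exists_pow_eq_one_apply_eq_conj [Nontrivial V]
    (φ : Module.End k V ≃ₐ[k] Module.End k V) {n : ℕ} (hn : n ≠ 0) (hφ : φ ^ n = 1) :
    ∃ u : Module.End k V, u ^ n = 1 ∧ ∀ x, φ x = u * x * u ^ (n - 1) := by
  obtain ⟨T, hT⟩ := φ.eq_linearEquivConjAlgEquiv
  let u : (Module.End k V)ˣ := LinearMap.GeneralLinearGroup.ofLinearEquiv T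
  have φ_apply (x : Module.End k V) : φ x = u * x * ↑u⁻¹ := by rw [hT]; rfl
  have pow_apply (j : ℕ) (x : Module.End k V) : (φ ^ j) x * ↑(u ^ j) = ↑(u ^ j) * x := by
    induction j generalizing x with
    | zero => simp
    | succ j ih =>
      rw [pow_succ, AlgEquiv.mul_apply, pow_succ u, Units.val_mul, ← mul_assoc, ih, φ_apply]
      simp only [mul_assoc, Units.inv_mul, mul_one]
  obtain ⟨c, hc⟩ : ∃ c : k, algebraMap k (Module.End k V) c = ↑(u ^ n) := by
    refine Algebra.mem_bot.1 (Algebra.IsCentral.out (Subalgebra.mem_center_iff.2 fun x => ?_))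
    simpa [hφ] using pow_apply n x
  have hc0 : c ≠ 0 := by
    rintro rfl
    exact (u ^ n).ne_zero (by rw [← hc, map_zero])
  obtain ⟨γ, hγ⟩ := IsAlgClosed.exists_pow_nat_eq c (Nat.pos_of_ne_zero hn)
  have pow_eq_one : (γ⁻¹ • (u : Module.End k V)) ^ n = 1 := by
    rw [smul_pow, ← Units.val_pow_eq_pow_val, ← hc, Algebra.algebraMap_eq_smul_one, smul_smul,
      inv_pow, hγ, inv_mul_cancel₀ hc0, one_smul]
  refine ⟨γ⁻¹ • u, pow_eq_one, fun x => ?_⟩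
  have apply_mul : φ x * (γ⁻¹ • (u : Module.End k V)) = γ⁻¹ • (u : Module.End k V) * x := by
    simp [φ_apply, mul_assoc]
  rw [← apply_mul, mul_assoc, mul_pow_sub_one hn, pow_eq_one, mul_one]

end Trace

section Positivity

open scoped ComplexOrder

variable {k : Type*} [Field k] [CharZero k]

lemma mem_algebraicClosure_of_pow_eq_one {μ : k} {n : ℕ} (hn : n ≠ 0) (hμ : μ ^ n = 1) :
    μ ∈ algebraicClosure ℚ k :=
  mem_algebraicClosure_iff.2
    ⟨Polynomial.X ^ n - 1, (Polynomial.monic_X_pow_sub_C 1 hn).ne_zero, by simp [hμ]⟩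

variable [IsAlgClosed k] (σ : algebraicClosure ℚ k →+* ℂ)

lemma exists_trace_eq_conj {V : Type*} [AddCommGroup V] [Module k V] [FiniteDimensional k V]
    {u : Module.End k V} {n : ℕ} (hn : n ≠ 0) (hu : u ^ n = 1) :
    ∃ t t' : algebraicClosure ℚ k, t = LinearMap.trace k V u ∧
      t' = LinearMap.trace k V (u ^ (n - 1)) ∧ σ t' = starRingEnd ℂ (σ t) := by
  obtain ⟨s, m, hs, trace_pow⟩ := exists_trace_pow_eq_sum hn hu
  let ν (μ : s) : algebraicClosure ℚ k := ⟨μ, mem_algebraicClosure_of_pow_eq_one hn (hs μ μ.2)⟩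
  have conj_ν (μ : s) : σ (ν μ) ^ (n - 1) = starRingEnd ℂ (σ (ν μ)) := by
    have pow_eq_one : σ (ν μ) ^ n = 1 := by
      rw [← map_pow, ← map_one σ]
      exact congrArg σ (Subtype.ext (hs μ μ.2))
    rw [← Complex.inv_eq_conj (Complex.norm_eq_one_of_pow_eq_one pow_eq_one hn)]
    exact eq_inv_of_mul_eq_one_left ((pow_sub_one_mul hn _).trans pow_eq_one)
  refine ⟨∑ μ : s, m μ * ν μ, ∑ μ : s, m μ * ν μ ^ (n - 1), ?_, ?_, ?_⟩
  · rw [← pow_one u, trace_pow, ← Finset.sum_coe_sort s]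
    simp [ν]
  · rw [trace_pow, ← Finset.sum_coe_sort s]
    simp [ν]
  · simp only [map_sum, map_mul, map_natCast, map_pow, conj_ν]

lemma exists_trace_eq_nonneg {V : Type*} [AddCommGroup V] [Module k V] [FiniteDimensional k V]
    [Nontrivial V] {φ : Module.End k V ≃ₐ[k] Module.End k V} (hφ : IsOfFinOrder φ) :
    ∃ t : algebraicClosure ℚ k, t = LinearMap.trace k _ φ.toLinearMap ∧ 0 ≤ σ t := by
  obtain ⟨n, hn, hφn⟩ := isOfFinOrder_iff_pow_eq_one.1 hφ
  obtain ⟨u, hu, φ_apply⟩ := exists_pow_eq_one_apply_eq_conj φ hn.ne' hφn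
  obtain ⟨t, t', ht, ht', conj_t⟩ := exists_trace_eq_conj σ hn.ne' hu
  have φ_eq : φ.toLinearMap = LinearMap.mulLeft k u ∘ₗ LinearMap.mulRight k (u ^ (n - 1)) := by
    ext x : 1
    simp [φ_apply, mul_assoc]
  refine ⟨t * t', ?_, ?_⟩
  · rw [φ_eq, trace_mulLeft_comp_mulRight, ← ht, ← ht']
    rfl
  · rw [map_mul, conj_t]
    exact mul_star_self_nonneg _

end Positivity

section Product

variable {k : Type*} [CommRing k] {ι : Type*} {A : ι → Type*} [∀ i, Ring (A i)]
  [∀ i, Algebra k (A i)]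

lemma piCongrRight_pow (φ : Π i, A i ≃ₐ[k] A i) (n : ℕ) :
    AlgEquiv.piCongrRight φ ^ n = AlgEquiv.piCongrRight (fun i => φ i ^ n) := by
  induction n with
  | zero => rfl
  | succ n ih => rw [pow_succ, ih]; simp only [pow_succ]; rfl

lemma isOfFinOrder_of_piCongrRight {φ : Π i, A i ≃ₐ[k] A i}
    (h : IsOfFinOrder (AlgEquiv.piCongrRight φ)) (i : ι) : IsOfFinOrder (φ i) := by
  classical
  obtain ⟨n, hn, hφn⟩ := isOfFinOrder_iff_pow_eq_one.1 h
  refine isOfFinOrder_iff_pow_eq_one.2 ⟨n, hn, AlgEquiv.ext fun x => ?_⟩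
  rw [piCongrRight_pow] at hφn
  simpa using congrFun (DFunLike.congr_fun hφn (Pi.single i x)) i

lemma trace_piCongrRight [Fintype ι] [∀ i, Module.Free k (A i)] [∀ i, Module.Finite k (A i)]
    (φ : Π i, A i ≃ₐ[k] A i) :
    LinearMap.trace k _ (AlgEquiv.piCongrRight φ).toLinearMap =
      ∑ i, LinearMap.trace k (A i) (φ i).toLinearMap := by
  classical
  have eq_sum : (AlgEquiv.piCongrRight φ).toLinearMap =
      ∑ i, (LinearMap.single k A i ∘ₗ (φ i).toLinearMap) ∘ₗ LinearMap.proj i := by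
    refine LinearMap.ext fun x => funext fun i => ?_
    simp [LinearMap.sum_apply, Finset.sum_apply]
  rw [eq_sum, map_sum]
  refine Finset.sum_congr rfl fun i _ => ?_
  rw [LinearMap.trace_comp_comm', ← LinearMap.comp_assoc, LinearMap.proj_comp_single_same,
    LinearMap.id_comp]

variable [DecidableEq ι]

lemma exists_eq_piCongrRight (T : (Π i, A i) ≃ₐ[k] Π i, A i)
    (hT : ∀ i, T (Pi.single i 1) = Pi.single i 1) :
    ∃ φ : Π i, A i ≃ₐ[k] A i, T = AlgEquiv.piCongrRight φ := by
  have single_mul (i : ι) (x : Π i, A i) : Pi.single i 1 * x = Pi.single i (x i) := by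
    rw [← Pi.single_mul_left, one_mul]
  have hT' (i : ι) : T.symm (Pi.single i 1) = Pi.single i 1 := by
    rw [AlgEquiv.symm_apply_eq, hT]
  have map_single {T : (Π i, A i) ≃ₐ[k] Π i, A i} (hT : ∀ i, T (Pi.single i 1) = Pi.single i 1)
      (i : ι) (x : Π i, A i) : T (Pi.single i (x i)) = Pi.single i (T x i) := by
    rw [← single_mul, map_mul, hT, single_mul]
  have apply_eq {T : (Π i, A i) ≃ₐ[k] Π i, A i} (hT : ∀ i, T (Pi.single i 1) = Pi.single i 1)
      (i : ι) (x : Π i, A i) : T (Pi.single i (x i)) i = T x i := by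
    rw [map_single hT, Pi.single_eq_same]
  let φ (i : ι) : A i ≃ₐ[k] A i := AlgEquiv.ofLinearEquiv
    (LinearEquiv.ofLinearMap
      (LinearMap.proj i ∘ₗ T.toLinearMap ∘ₗ LinearMap.single k A i)
      (LinearMap.proj i ∘ₗ T.symm.toLinearMap ∘ₗ LinearMap.single k A i)
      (by ext x; simp [apply_eq hT]) (by ext x; simp [apply_eq hT']))
    (by simp [hT]) (fun x y => by simp [Pi.single_mul])
  exact ⟨φ, AlgEquiv.ext fun x => funext fun i => (apply_eq hT i x).symm⟩

lemma exists_map_single_eq_one [IsDomain k] [Finite ι] (e : (Π i, A i) →ₐ[k] k) :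
    ∃ i, e (Pi.single i 1) = 1 := by
  have := Fintype.ofFinite ι
  by_contra! h
  have map_single_eq_zero (i : ι) : e (Pi.single i 1) = 0 := by
    have idempotent : IsIdempotentElem (e (Pi.single i 1)) := by
      rw [IsIdempotentElem, ← map_mul, ← Pi.single_mul, mul_one]
    exact (IsIdempotentElem.iff_eq_zero_or_one.1 idempotent).resolve_right (h i)
  have : e 1 = 0 := by
    rw [← Finset.univ_sum_single (1 : Π i, A i), map_sum]
    exact Finset.sum_eq_zero fun i _ => map_single_eq_zero i
  simp at this

end Product

section Semisimple

open scoped ComplexOrder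

lemma isSimpleRing_end (k V : Type*) [Field k] [AddCommGroup V] [Module k V]
    [FiniteDimensional k V] [Nontrivial V] : IsSimpleRing (Module.End k V) := by
  have : Nonempty (Fin (Module.finrank k V)) := ⟨⟨0, Module.finrank_pos⟩⟩
  exact IsSimpleRing.of_ringEquiv
    (LinearMap.toMatrixAlgEquiv (Module.finBasis k V)).symm.toRingEquiv inferInstance

variable {k : Type*} [Field k] [CharZero k] [IsAlgClosed k]

lemma trace_algEquiv_pi_end_ne_zero {ι : Type*} [Finite ι] [DecidableEq ι] {V : ι → Type*}
    [∀ i, AddCommGroup (V i)] [∀ i, Module k (V i)] [∀ i, FiniteDimensional k (V i)]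
    [∀ i, Nontrivial (V i)] {T : (Π i, Module.End k (V i)) ≃ₐ[k] Π i, Module.End k (V i)}
    (hT : IsOfFinOrder T) (hT_single : ∀ i, T (Pi.single i 1) = Pi.single i 1)
    (e : (Π i, Module.End k (V i)) →ₐ[k] k) (he : ∀ x, e (T x) = e x) :
    LinearMap.trace k _ T.toLinearMap ≠ 0 := by
  have := Fintype.ofFinite ι
  obtain ⟨φ, rfl⟩ := exists_eq_piCongrRight T hT_single
  have : Algebra.IsAlgebraic ℚ (algebraicClosure ℚ k) := algebraicClosure.isAlgebraic ℚ k
  let σ : algebraicClosure ℚ k →ₐ[ℚ] ℂ := IsAlgClosed.lift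
  choose t ht ht_nonneg using fun i =>
    exists_trace_eq_nonneg (σ : algebraicClosure ℚ k →+* ℂ) (isOfFinOrder_of_piCongrRight hT i)
  obtain ⟨i, hi⟩ := exists_map_single_eq_one e
  have φ_i : φ i = AlgEquiv.refl := by
    -- The augmentation restricts to an injective map on the simple block `i`.
    let e_i : Module.End k (V i) →ₐ[k] k := AlgHom.ofLinearMap
      (e.toLinearMap ∘ₗ LinearMap.single k (fun i => Module.End k (V i)) i) hi
      fun x y => by simp [Pi.single_mul]
    have := isSimpleRing_end k (V i)
    refine AlgEquiv.ext fun x => (e_i : Module.End k (V i) →+* k).injective ?_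
    calc e (Pi.single i (φ i x))
        = e (AlgEquiv.piCongrRight φ (Pi.single i x)) :=
          congrArg e (funext (Pi.apply_single (fun i => φ i) (fun i => map_zero _) i x)).symm
      _ = e (Pi.single i x) := he _
  have t_i_ne_zero : σ (t i) ≠ 0 := by
    refine (map_ne_zero σ).2 fun h => ?_
    have trace_eq := ht i
    rw [φ_i, h] at trace_eq
    have finrank_pos : 0 < Module.finrank k (Module.End k (V i)) := Module.finrank_pos
    refine (Nat.cast_ne_zero (R := k)).2 finrank_pos.ne' ?_
    rw [← LinearMap.trace_id]
    exact trace_eq.symm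
  rw [trace_piCongrRight]
  intro h
  have sum_eq_zero : ∑ i, σ (t i) = 0 := by
    rw [← map_sum, map_eq_zero]
    exact Subtype.val_injective (by simpa [ht] using h)
  exact t_i_ne_zero ((Finset.sum_eq_zero_iff_of_nonneg fun i _ => ht_nonneg i).1 sum_eq_zero i
    (Finset.mem_univ i))

lemma trace_algEquiv_ne_zero {A : Type*} [Ring A] [Algebra k A] [FiniteDimensional k A]
    [IsSemisimpleRing A] {T : A ≃ₐ[k] A} (hT : IsOfFinOrder T)
    (hT_center : ∀ x ∈ Subalgebra.center k A, T x = x) (e : A →ₐ[k] k) (he : ∀ x, e (T x) = e x) :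
    LinearMap.trace k A T.toLinearMap ≠ 0 := by
  obtain ⟨r, d, _, ⟨F⟩⟩ := IsSemisimpleRing.exists_algEquiv_pi_matrix_of_isAlgClosed k A
  let F' : A ≃ₐ[k] Π i : Fin r, Module.End k (Fin (d i) → k) :=
    F.trans (AlgEquiv.piCongrRight fun i => Matrix.toLinAlgEquiv')
  have single_mem_center (i : Fin r) : F'.symm (Pi.single i 1) ∈ Subalgebra.center k A := by
    refine Subalgebra.mem_center_iff.2 fun x => F'.injective ?_
    rw [map_mul, map_mul, AlgEquiv.apply_symm_apply, ← Pi.single_mul_left, ← Pi.single_mul_right,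
      one_mul, mul_one]
  have trace_ne_zero := trace_algEquiv_pi_end_ne_zero (T := AlgEquiv.autCongr F' T)
    ((AlgEquiv.autCongr F').toMonoidHom.isOfFinOrder hT)
    (fun i => by simp [hT_center _ (single_mem_center i)])
    (e.comp F'.symm.toAlgHom) (fun x => by simp [he])
  have conj : (AlgEquiv.autCongr F' T).toLinearMap = F'.toLinearEquiv.conj T.toLinearMap := rfl
  rwa [conj, LinearMap.trace_conj'] at trace_ne_zero

end Semisimple

section Antipode

variable (k H : Type*) [Field k] [CharZero k] [IsAlgClosed k] [Ring H] [HopfAlgebra k H]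
  [FiniteDimensional k H] [IsSemisimpleRing H]

local notation "S" => antipode k (A := H)

lemma trace_antipode_comp_antipode_ne_zero : LinearMap.trace k H (S ∘ₗ S) ≠ 0 := by
  obtain ⟨Λ, hΛ⟩ := exists_isNormalizedIntegral k H
  let T : H ≃ₐ[k] H := AlgEquiv.ofBijective
    (AlgHom.ofLinearMap (S ∘ₗ S) (by simp) fun x y => by simp [antipode_mul_antidistrib])
    ⟨(antipode_injective hΛ).comp (antipode_injective hΛ),
      (antipode_surjective hΛ).comp (antipode_surjective hΛ)⟩
  have T_pow_apply (n : ℕ) (x : H) : (T ^ n) x = ((S ∘ₗ S : Module.End k H) ^ n) x := by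
    induction n with
    | zero => simp
    | succ n ih => rw [pow_succ', AlgEquiv.mul_apply, ih, pow_succ', Module.End.mul_apply]; rfl
  have T_finOrder : IsOfFinOrder T := by
    obtain ⟨n, hn, pow_eq_one⟩ :=
      isOfFinOrder_iff_pow_eq_one.1 (isOfFinOrder_antipode_comp_antipode hΛ)
    refine isOfFinOrder_iff_pow_eq_one.2 ⟨n, hn, AlgEquiv.ext fun x => ?_⟩
    rw [T_pow_apply, pow_eq_one]
    rfl
  exact trace_algEquiv_ne_zero T_finOrder
    (fun z hz => antipode_antipode_eq_self_of_mem_center hΛ hz)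
    (Bialgebra.counitAlgHom k H) fun x => (counit_antipode (S x)).trans (counit_antipode x)

lemma exists_isRightIntegral_apply_one_eq_one :
    ∃ τ : H →ₗ[k] k, IsRightIntegral k τ ∧ τ 1 = 1 := by
  have trInt_one_ne_zero : trInt k (1 : H) ≠ 0 := by
    rw [trInt_one]
    exact trace_antipode_comp_antipode_ne_zero k H
  exact ⟨(trInt k (1 : H))⁻¹ • trInt k, isRightIntegral_trInt.smul _, by simp [trInt_one_ne_zero]⟩

end Antipode

/-! ### Subcoalgebras -/

section Subcoalgebras

variable {k : Type} [Field k] {H : Type} [Ring H] [HopfAlgebra k H] {V : Type*} [AddCommGroup V]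
  [Module k V] {D C : Submodule k H}

local notation "ε" => counit (R := k) (A := H)
local notation "S" => antipode k (A := H)

namespace IsSubcoalgebra

lemma exists_comul_eq_sum (hD : IsSubcoalgebra k H D) {h : H} (hh : h ∈ D) :
    ∃ s : Finset (D × D), comul (R := k) h = ∑ p ∈ s, (p.1 : H) ⊗ₜ[k] (p.2 : H) := by
  obtain ⟨z, hz⟩ := hD h hh
  obtain ⟨s, rfl⟩ := TensorProduct.exists_finset z
  exact ⟨s, by rw [← hz, map_sum]; rfl⟩

lemma sw_mem (hD : IsSubcoalgebra k H D) {h : H} (hh : h ∈ D) {f : H → H → V} (P : Submodule k V)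
    (hf : ∀ a ∈ D, ∀ b ∈ D, f a b ∈ P) (h₁ : ∀ b, IsLinearMap k (fun a => f a b) := by fun_prop)
    (h₂ : ∀ a, IsLinearMap k (fun b => f a b) := by fun_prop) : sw k f h ∈ P := by
  obtain ⟨s, hs⟩ := hD.exists_comul_eq_sum hh
  rw [sw_eq_sum h s _ _ hs]
  exact Submodule.sum_mem _ fun p _ => hf _ p.1.2 _ p.2.2

lemma sw_congr (hD : IsSubcoalgebra k H D) {h : H} (hh : h ∈ D) {f g : H → H → V}
    (hfg : ∀ a ∈ D, ∀ b ∈ D, f a b = g a b)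
    (h₁ : ∀ b, IsLinearMap k (fun a => f a b) := by fun_prop)
    (h₂ : ∀ a, IsLinearMap k (fun b => f a b) := by fun_prop)
    (h₃ : ∀ b, IsLinearMap k (fun a => g a b) := by fun_prop)
    (h₄ : ∀ a, IsLinearMap k (fun b => g a b) := by fun_prop) : sw k f h = sw k g h := by
  obtain ⟨s, hs⟩ := hD.exists_comul_eq_sum hh
  rw [sw_eq_sum h s _ _ hs, sw_eq_sum h s _ _ hs]
  exact Finset.sum_congr rfl fun p _ => hfg _ p.1.2 _ p.2.2

end IsSubcoalgebra

lemma rTensor_eq_self {U : Type*} [AddCommGroup U] [Module k U] {p : V →ₗ[k] V} {z : V ⊗[k] U}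
    (h : ∀ φ : U →ₗ[k] k, p (TensorProduct.rid k V (φ.lTensor V z)) =
      TensorProduct.rid k V (φ.lTensor V z)) : p.rTensor U z = z := by
  classical
  apply (TensorProduct.equivFinsuppOfBasisRight (M := V) (Module.Basis.ofVectorSpace k U)).injective
  ext i
  rw [TensorProduct.equivFinsuppOfBasisRight_apply, TensorProduct.equivFinsuppOfBasisRight_apply,
    ← h]
  clear h
  induction z with
  | zero => simp
  | tmul => simp
  | add x y hx hy => simp only [map_add, hx, hy]

lemma lTensor_eq_self {U : Type*} [AddCommGroup U] [Module k U] {p : V →ₗ[k] V} {z : U ⊗[k] V}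
    (h : ∀ φ : U →ₗ[k] k, p (TensorProduct.lid k V (φ.rTensor V z)) =
      TensorProduct.lid k V (φ.rTensor V z)) : p.lTensor U z = z := by
  classical
  apply (TensorProduct.equivFinsuppOfBasisLeft (N := V) (Module.Basis.ofVectorSpace k U)).injective
  ext i
  rw [TensorProduct.equivFinsuppOfBasisLeft_apply, TensorProduct.equivFinsuppOfBasisLeft_apply, ← h]
  clear h
  induction z with
  | zero => simp
  | tmul => simp
  | add x y hx hy => simp only [map_add, hx, hy]

namespace IsSubcoalgebra

lemma hitL_mem (hD : IsSubcoalgebra k H D) (φ : H →ₗ[k] k) {h : H} (hh : h ∈ D) :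
    hitL φ h ∈ D := by
  rw [hitL_apply]
  exact hD.sw_mem hh _ fun a ha b _ => D.smul_mem _ ha

lemma hitR_mem (hD : IsSubcoalgebra k H D) (φ : H →ₗ[k] k) {h : H} (hh : h ∈ D) :
    hitR φ h ∈ D := by
  rw [hitR_apply]
  exact hD.sw_mem hh _ fun a _ b hb => D.smul_mem _ hb

end IsSubcoalgebra

lemma isSubcoalgebra_of_le_comap (hL : ∀ φ : H →ₗ[k] k, D ≤ D.comap (hitL φ))
    (hR : ∀ φ : H →ₗ[k] k, D ≤ D.comap (hitR φ)) : IsSubcoalgebra k H D := by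
  obtain ⟨q, hq⟩ := D.subtype.exists_leftInverse_of_injective D.ker_subtype
  set p : H →ₗ[k] H := D.subtype ∘ₗ q with hp
  have p_apply (h) (hh : h ∈ D) : p h = h :=
    congrArg Subtype.val (LinearMap.congr_fun hq ⟨h, hh⟩)
  intro h hh
  have left : p.rTensor H (comul (R := k) h) = comul h :=
    rTensor_eq_self fun φ => p_apply _ (hL φ hh)
  have right : p.lTensor H (comul (R := k) h) = comul h :=
    lTensor_eq_self fun φ => p_apply _ (hR φ hh)
  refine ⟨TensorProduct.map q q (comul h), ?_⟩
  rw [← LinearMap.comp_apply, ← TensorProduct.map_comp, ← hp, ← LinearMap.lTensor_comp_rTensor,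
    LinearMap.comp_apply, left, right]

namespace IsSubcoalgebra

lemma sSup {s : Set (Submodule k H)} (hs : ∀ D ∈ s, IsSubcoalgebra k H D) :
    IsSubcoalgebra k H (sSup s) := by
  refine isSubcoalgebra_of_le_comap (fun φ => ?_) (fun φ => ?_)
  · exact sSup_le fun D hD h hh =>
      le_sSup hD ((hs D hD).hitL_mem φ hh)
  · exact sSup_le fun D hD h hh =>
      le_sSup hD ((hs D hD).hitR_mem φ hh)

lemma inf (hC : IsSubcoalgebra k H C) (hD : IsSubcoalgebra k H D) : IsSubcoalgebra k H (C ⊓ D) :=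
  isSubcoalgebra_of_le_comap (fun φ _ hh => ⟨hC.hitL_mem φ hh.1, hD.hitL_mem φ hh.2⟩)
    (fun φ _ hh => ⟨hC.hitR_mem φ hh.1, hD.hitR_mem φ hh.2⟩)

lemma mul (hC : IsSubcoalgebra k H C) (hD : IsSubcoalgebra k H D) :
    IsSubcoalgebra k H (C * D) := by
  refine isSubcoalgebra_of_le_comap (fun φ => ?_) (fun φ => ?_)
  · refine Submodule.mul_le.2 fun c hc d hd => ?_
    rw [Submodule.mem_comap, hitL_apply, sw_mul]
    refine hC.sw_mem hc _ fun a ha b _ => hD.sw_mem hd _ fun a' ha' b' _ => ?_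
    exact Submodule.smul_mem _ _ (Submodule.mul_mem_mul ha ha')
  · refine Submodule.mul_le.2 fun c hc d hd => ?_
    rw [Submodule.mem_comap, hitR_apply, sw_mul]
    refine hC.sw_mem hc _ fun b _ a ha => hD.sw_mem hd _ fun b' _ a' ha' => ?_
    exact Submodule.smul_mem _ _ (Submodule.mul_mem_mul ha ha')

lemma map_antipode (hC : IsSubcoalgebra k H C) : IsSubcoalgebra k H (C.map S) := by
  refine isSubcoalgebra_of_le_comap (fun φ => ?_) (fun φ => ?_)
  · rintro _ ⟨c, hc, rfl⟩
    rw [Submodule.mem_comap, hitL_apply, sw_antipode]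
    exact hC.sw_mem hc _ fun b _ a ha => Submodule.smul_mem _ _ (Submodule.mem_map_of_mem ha)
  · rintro _ ⟨c, hc, rfl⟩
    rw [Submodule.mem_comap, hitR_apply, sw_antipode]
    exact hC.sw_mem hc _ fun a ha b _ => Submodule.smul_mem _ _ (Submodule.mem_map_of_mem ha)

lemma hitL_eq_self (hD : IsSubcoalgebra k H D) {φ : H →ₗ[k] k} (hφ : ∀ h ∈ D, φ h = ε h) {h : H}
    (hh : h ∈ D) : hitL φ h = h := by
  rw [hitL_apply, hD.sw_congr hh fun a _ b hb => by rw [hφ b hb]]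
  exact sw_counit_right (f := fun a => a) h

lemma hitR_eq_self (hD : IsSubcoalgebra k H D) {φ : H →ₗ[k] k} (hφ : ∀ h ∈ D, φ h = ε h) {h : H}
    (hh : h ∈ D) : hitR φ h = h := by
  rw [hitR_apply, hD.sw_congr hh fun a ha b _ => by rw [hφ a ha]]
  exact sw_counit_left (f := fun a => a) h

lemma hitL_eq_zero (hD : IsSubcoalgebra k H D) {φ : H →ₗ[k] k} (hφ : ∀ h ∈ D, φ h = 0) {h : H}
    (hh : h ∈ D) : hitL φ h = 0 := by
  rw [hitL_apply]
  exact (Submodule.mem_bot k).1 <| hD.sw_mem hh ⊥ fun a _ b hb => by simp [hφ b hb]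

lemma exists_counit_ne_zero (hD : IsSubcoalgebra k H D) (h0 : D ≠ ⊥) : ∃ d ∈ D, ε d ≠ 0 := by
  by_contra! hcon
  refine h0 ((Submodule.eq_bot_iff _).2 fun h hh => ?_)
  rw [← hD.hitL_eq_self (fun _ _ => rfl) hh, hD.hitL_eq_zero hcon hh]

lemma exists_simple_le [FiniteDimensional k H] (hD : IsSubcoalgebra k H D) (h0 : D ≠ ⊥) :
    ∃ C ≤ D, IsSimpleSubcoalgebra k H C := by
  obtain ⟨C, ⟨hCD, hC, hC0⟩, hmin⟩ := wellFounded_lt.has_min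
    {C : Submodule k H | C ≤ D ∧ IsSubcoalgebra k H C ∧ C ≠ ⊥} ⟨D, le_rfl, hD, h0⟩
  refine ⟨C, hCD, hC, hC0, fun E hEC hE hE0 => ?_⟩
  by_contra hne
  exact hmin E ⟨hEC.trans hCD, hE, hE0⟩ (lt_of_le_of_ne hEC hne)

end IsSubcoalgebra

lemma isSimpleSubcoalgebra_one [Nontrivial H] : IsSimpleSubcoalgebra k H 1 := by
  refine ⟨isSubcoalgebra_of_le_comap (fun φ => ?_) (fun φ => ?_), one_ne_zero,
    fun D hD _ hD0 => ?_⟩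
  · refine Submodule.one_le.2 ?_
    rw [Submodule.mem_comap, hitL_apply, sw_of_isGroupLikeElem .one]
    exact Submodule.smul_mem _ _ (Submodule.one_le.1 le_rfl)
  · refine Submodule.one_le.2 ?_
    rw [Submodule.mem_comap, hitR_apply, sw_of_isGroupLikeElem .one]
    exact Submodule.smul_mem _ _ (Submodule.one_le.1 le_rfl)
  · obtain ⟨d, hd, hd0⟩ := Submodule.exists_mem_ne_zero_of_ne_bot hD0
    obtain ⟨c, rfl⟩ := Submodule.mem_one.1 (hD hd)
    have hc : c ≠ 0 := by rintro rfl; simp at hd0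
    refine le_antisymm hD (Submodule.one_le.2 ?_)
    simpa [Algebra.algebraMap_eq_smul_one, smul_smul, hc] using D.smul_mem c⁻¹ hd

namespace IsSimpleSubcoalgebra

lemma le_or_le {A B : Submodule k H} (hC : IsSimpleSubcoalgebra k H C)
    (hA : IsSubcoalgebra k H A) (hB : IsSubcoalgebra k H B) (h : C ≤ A ⊔ B) : C ≤ A ∨ C ≤ B := by
  by_cases h0 : C ⊓ A = ⊥
  · right
    -- A functional that vanishes on `A` and is `ε` on `C` fixes `C` and moves `A ⊔ B` into `B`.
    obtain ⟨f, hfA, hfC⟩ : ∃ f : H →ₗ[k] k, (∀ a ∈ A, f a = 0) ∧ ∀ c ∈ C, f c = ε c := by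
      obtain ⟨A', hAA', hCA'⟩ := (disjoint_iff.2 h0).symm.exists_isCompl
      refine ⟨ε ∘ₗ C.subtype ∘ₗ C.projectionOnto A' hCA'.symm, fun a ha => ?_, fun c hc => ?_⟩
      · simp [(Submodule.projectionOnto_apply_eq_zero_iff hCA'.symm).2 (hAA' ha)]
      · simp [Submodule.projectionOnto_apply_left hCA'.symm ⟨c, hc⟩]
    intro c hc
    obtain ⟨a, ha, b, hb, hab⟩ := Submodule.mem_sup.1 (h hc)
    rw [← hC.1.hitL_eq_self hfC hc, ← hab, map_add, hA.hitL_eq_zero hfA ha, zero_add]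
    exact hB.hitL_mem f hb
  · exact .inl <| inf_eq_left.1 (hC.2.2 _ inf_le_left (hC.1.inf hA) h0)

lemma exists_le_of_le_sSup [FiniteDimensional k H] (hC : IsSimpleSubcoalgebra k H C)
    {s : Set (Submodule k H)} (hs : ∀ D ∈ s, IsSubcoalgebra k H D) (h : C ≤ sSup s) :
    ∃ D ∈ s, C ≤ D := by
  classical
  obtain ⟨t, hts, ht⟩ := CompleteLattice.WellFoundedGT.isSupFiniteCompact (Submodule k H) s
  rw [ht] at h
  clear ht
  induction t using Finset.induction_on with
  | empty => exact absurd (le_bot_iff.1 (by simpa using h)) hC.2.1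
  | insert D t _ ih =>
    rw [Finset.coe_insert, Set.insert_subset_iff] at hts
    rw [Finset.sup_insert] at h
    have ht : IsSubcoalgebra k H (t.sup id) := by
      rw [Finset.sup_id_eq_sSup]
      exact IsSubcoalgebra.sSup fun E hE => hs E (hts.2 hE)
    exact (hC.le_or_le (hs D hts.1) ht h).elim (fun hCD => ⟨D, hts.1, hCD⟩) fun hCt => ih hCt hts.2

end IsSimpleSubcoalgebra

end Subcoalgebras

/-! ### Cosemisimplicity -/

section Cosemisimple

variable {k : Type} [Field k] {H : Type} [Ring H] [HopfAlgebra k H] {τ : H →ₗ[k] k}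

local notation "ε" => counit (R := k) (A := H)
local notation "S" => antipode k (A := H)

/-- The bilinear form `(x, y) ↦ τ(S(x) y)` attached to a functional `τ`. For a right integral with
`τ(1) = 1` it is invariant and splits the coproduct, see `sw_integralForm_smul` and
`sw_integralForm`. -/
def integralForm (τ : H →ₗ[k] k) (x y : H) : k := τ (S x * y)

section Linearity

variable {V : Type*} [AddCommGroup V] [Module k V] {g : V → H}

@[fun_prop]
lemma isLinearMap_integralForm_left (hg : IsLinearMap k g) (y : H) :
    IsLinearMap k (fun v => integralForm τ (g v) y) := by
  unfold integralForm; fun_prop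

@[fun_prop]
lemma isLinearMap_integralForm_right (hg : IsLinearMap k g) (x : H) :
    IsLinearMap k (fun v => integralForm τ x (g v)) := by
  unfold integralForm; fun_prop

end Linearity

lemma sw_integralForm (hτ : τ 1 = 1) (x : H) : sw k (integralForm τ) x = ε x := by
  refine (sw_antipode_mul (f := fun z => τ z) x).trans ?_
  simp [hτ]

lemma IsRightIntegral.sw_integralForm_smul (hτ : IsRightIntegral k τ) (x y : H) :
    sw k (fun a b => integralForm τ b y • a) x = sw k (fun a b => integralForm τ x a • b) y := by
  have expand (a b : H) : integralForm τ b y • a =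
      sw k (fun p q => sw k (fun c d => τ (S q * c) • (a * S p * d)) y) b := calc
    _ = a * hitR τ (S b * y) := by rw [hτ, mul_smul_comm, mul_one, integralForm]
    _ = _ := by
      rw [hitR_apply, sw_mul, sw_antipode]
      simp only [mul_sw, mul_smul_comm, mul_assoc]
  calc sw k (fun a b => integralForm τ b y • a) x
    _ = sw k (fun a q => sw k (fun a p =>
          sw k (fun c d => τ (S q * c) • (a * S p * d)) y) a) x := by
      simp only [expand]
      exact sw_assoc (t := fun a p q => sw k (fun c d => τ (S q * c) • (a * S p * d)) y) x
    _ = sw k (fun a q => ε a • sw k (fun c d => τ (S q * c) • d) y) x := by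
      congr! 3 with u q
      refine (sw_mul_antipode (f := fun z => sw k (fun c d => τ (S q * c) • (z * d)) y) u).trans ?_
      simp only [one_mul]
    _ = sw k (fun a b => integralForm τ x a • b) y :=
      sw_counit_left (f := fun q => sw k (fun c d => integralForm τ q c • d) y) x

namespace IsSubcoalgebra

lemma exists_isCompl (hτ : IsRightIntegral k τ) (hτ1 : τ 1 = 1) {D : Submodule k H}
    (hD : IsSubcoalgebra k H D) : ∃ E, IsSubcoalgebra k H E ∧ IsCompl D E := by
  obtain ⟨q, hq⟩ := D.subtype.exists_leftInverse_of_injective D.ker_subtype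
  let p : H →ₗ[k] H := D.subtype ∘ₗ q
  have p_mem (h) : p h ∈ D := (q h).2
  have p_apply (h) (hh : h ∈ D) : p h = h :=
    congrArg Subtype.val (LinearMap.congr_fun hq ⟨h, hh⟩)
  let θ : H →ₗ[k] k := IsLinearMap.mk' (sw k fun a b => integralForm τ a (p b)) (by fun_prop)
  let η : H →ₗ[k] k := IsLinearMap.mk' (sw k fun a b => integralForm τ (p a) b) (by fun_prop)
  have θ_apply (h) (hh : h ∈ D) : θ h = ε h := by
    rw [← sw_integralForm hτ1 h]
    exact hD.sw_congr hh fun a _ b hb => congrArg (integralForm τ a) (p_apply b hb)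
  have η_apply (h) (hh : h ∈ D) : η h = ε h := by
    rw [← sw_integralForm hτ1 h]
    exact hD.sw_congr hh fun a ha b _ => congrArg (integralForm τ · b) (p_apply a ha)
  have hitL_mem (h) : hitL θ h ∈ D := by
    have : hitL θ h = sw k (fun x y => sw k (fun a b => integralForm τ x a • b) (p y)) h := by
      simp only [← hτ.sw_integralForm_smul]
      rw [← sw_assoc (t := fun a b y => integralForm τ b (p y) • a), hitL_apply]
      simp only [θ, IsLinearMap.mk'_apply, sw_smul_const]
    rw [this]
    exact Submodule.sum_mem _ fun _ _ =>
      hD.sw_mem (p_mem _) _ fun a _ b hb => D.smul_mem _ hb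
  have hitR_mem (h) : hitR η h ∈ D := by
    have : hitR η h = sw k (fun x y => sw k (fun a b => integralForm τ b y • a) (p x)) h := by
      simp only [hτ.sw_integralForm_smul]
      rw [sw_assoc (t := fun x a b => integralForm τ (p x) a • b), hitR_apply]
      simp only [η, IsLinearMap.mk'_apply, sw_smul_const]
    rw [this]
    exact Submodule.sum_mem _ fun _ _ =>
      hD.sw_mem (p_mem _) _ fun a ha b _ => D.smul_mem _ ha
  have hit_eq (h) : hitL θ h = hitR η h := by
    rw [← hD.hitR_eq_self η_apply (hitL_mem h), ← hitL_hitR, hD.hitL_eq_self θ_apply (hitR_mem h)]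
  refine ⟨LinearMap.ker (hitL θ), isSubcoalgebra_of_le_comap (fun φ h hh => ?_) fun φ h hh => ?_,
    LinearMap.IsProj.isCompl ⟨hitL_mem, fun h hh => hD.hitL_eq_self θ_apply hh⟩⟩
  · rw [Submodule.mem_comap, LinearMap.mem_ker, hit_eq, ← hitL_hitR, ← hit_eq,
      LinearMap.mem_ker.1 hh, map_zero]
  · rw [Submodule.mem_comap, LinearMap.mem_ker, hitL_hitR, LinearMap.mem_ker.1 hh, map_zero]

end IsSubcoalgebra

variable (k H) in
/-- Cosemisimplicity of `H` as a coalgebra, in the form in which it is used: every subcoalgebra is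
the sum of its simple subcoalgebras. -/
def IsCosemisimple : Prop :=
  ∀ D, IsSubcoalgebra k H D → D = sSup {C | IsSimpleSubcoalgebra k H C ∧ C ≤ D}

lemma IsRightIntegral.isCosemisimple [FiniteDimensional k H] (hτ : IsRightIntegral k τ)
    (hτ1 : τ 1 = 1) : IsCosemisimple k H := fun D hD => by
  set E := sSup {C | IsSimpleSubcoalgebra k H C ∧ C ≤ D}
  have hED : E ≤ D := sSup_le fun C hC => hC.2
  obtain ⟨F, hF, hEF⟩ := IsSubcoalgebra.exists_isCompl hτ hτ1
    (IsSubcoalgebra.sSup fun C hC => hC.1.1 : IsSubcoalgebra k H E)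
  have hFD : F ⊓ D = ⊥ := by
    by_contra hne
    obtain ⟨C, hC, hCs⟩ := (hF.inf hD).exists_simple_le hne
    exact hCs.2.1 (le_bot_iff.1 (hEF.disjoint (le_sSup ⟨hCs, hC.trans inf_le_right⟩)
      (hC.trans inf_le_left)))
  calc D = (E ⊔ F) ⊓ D := by rw [hEF.sup_eq_top, top_inf_eq]
    _ = E := by rw [sup_inf_assoc_of_le F hED, hFD, sup_bot_eq]

end Cosemisimple

/-! ### Homogeneous components -/

section Grading

variable {k : Type} [Field k] {H : Type} [Ring H] [HopfAlgebra k H] {G : Type}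
  {deg : Submodule k H → G}

lemma sSup_mul_sSup_le {s t : Set (Submodule k H)} {P : Submodule k H}
    (h : ∀ A ∈ s, ∀ B ∈ t, A * B ≤ P) : sSup s * sSup t ≤ P := by
  simp only [sSup_eq_iSup, Submodule.iSup_mul, Submodule.mul_iSup, iSup_le_iff]
  exact fun B hB A hA => h A hA B hB

lemma IsSubcoalgebra.one_le_mul_map_antipode {C : Submodule k H} (hC : IsSubcoalgebra k H C)
    (h0 : C ≠ ⊥) : 1 ≤ C * C.map (antipode k) := by
  obtain ⟨c, hc, hc0⟩ := hC.exists_counit_ne_zero h0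
  have counit_smul_mem : counit (R := k) c • (1 : H) ∈ C * C.map (antipode k) := by
    rw [← sw_mul_antipode (f := fun x => x) c]
    exact hC.sw_mem hc _ fun a ha b hb =>
      Submodule.mul_mem_mul ha (Submodule.mem_map_of_mem hb)
  rw [Submodule.one_le]
  simpa [smul_smul, hc0] using Submodule.smul_mem _ (counit (R := k) c)⁻¹ counit_smul_mem

variable [Group G]

local notation "𝓗" => Hgr k H G deg

lemma IsSimpleSubcoalgebra.le_Hgr {C : Submodule k H} (hC : IsSimpleSubcoalgebra k H C)
    {T : Set G} (hT : deg C ∈ T) : C ≤ 𝓗 T :=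
  le_sSup ⟨hC, hT⟩

lemma isSubcoalgebra_Hgr (T : Set G) : IsSubcoalgebra k H (𝓗 T) :=
  IsSubcoalgebra.sSup fun _ hC => hC.1.1

lemma Hgr_mono {T U : Set G} (h : T ⊆ U) : 𝓗 T ≤ 𝓗 U :=
  sSup_le_sSup fun _ hC => ⟨hC.1, h hC.2⟩

lemma Hgr_le_of_forall_singleton {T : Set G} {P : Submodule k H} (h : ∀ t ∈ T, 𝓗 {t} ≤ P) :
    𝓗 T ≤ P :=
  sSup_le fun C hC => (hC.1.le_Hgr (Set.mem_singleton _)).trans (h (deg C) hC.2)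

lemma IsCosemisimple.le_Hgr (hcs : IsCosemisimple k H) {D : Submodule k H}
    (hD : IsSubcoalgebra k H D) {T : Set G}
    (h : ∀ C, IsSimpleSubcoalgebra k H C → C ≤ D → deg C ∈ T) : D ≤ 𝓗 T :=
  (hcs D hD).le.trans (sSup_le fun _ hC => hC.1.le_Hgr (h _ hC.1 hC.2))

lemma Hgr_mul_le (hcs : IsCosemisimple k H) (hdeg : IsGrading k H G deg) {T U W : Set G}
    (h : ∀ t ∈ T, ∀ u ∈ U, t * u ∈ W) : 𝓗 T * 𝓗 U ≤ 𝓗 W :=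
  sSup_mul_sSup_le fun A hA B hB => hcs.le_Hgr (hA.1.1.mul hB.1.1) fun C hC hCAB => by
    rw [hdeg A B C hA.1 hB.1 hC hCAB]
    exact h _ hA.2 _ hB.2

lemma Hgr_singleton_mul_le (hcs : IsCosemisimple k H) (hdeg : IsGrading k H G deg) (a b : G) :
    𝓗 {a} * 𝓗 {b} ≤ 𝓗 {a * b} :=
  Hgr_mul_le hcs hdeg (by rintro _ rfl _ rfl; rfl)

lemma deg_one [Nontrivial H] (hdeg : IsGrading k H G deg) : deg 1 = 1 := by
  have h1 := isSimpleSubcoalgebra_one (k := k) (H := H)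
  exact left_eq_mul.1 (hdeg 1 1 1 h1 h1 h1 (by rw [one_mul]))

variable [FiniteDimensional k H]

lemma IsSimpleSubcoalgebra.deg_mem {C : Submodule k H} (hC : IsSimpleSubcoalgebra k H C)
    {T : Set G} (h : C ≤ 𝓗 T) : deg C ∈ T := by
  obtain ⟨D, hD, hCD⟩ := hC.exists_le_of_le_sSup (fun _ hD => hD.1.1) h
  rw [hD.1.2.2 C hCD hC.1 hC.2.1]
  exact hD.2

lemma disjoint_Hgr {T U : Set G} (h : Disjoint T U) : Disjoint (𝓗 T) (𝓗 U) := by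
  rw [disjoint_iff]
  by_contra hne
  obtain ⟨C, hC, hCs⟩ := ((isSubcoalgebra_Hgr T).inf (isSubcoalgebra_Hgr U)).exists_simple_le hne
  exact Set.disjoint_left.1 h (hCs.deg_mem (hC.trans inf_le_left))
    (hCs.deg_mem (hC.trans inf_le_right))

lemma isInternal_Hgr_singleton [DecidableEq G] (hcs : IsCosemisimple k H) :
    DirectSum.IsInternal fun g : G => 𝓗 {g} := by
  refine DirectSum.isInternal_submodule_of_iSupIndep_of_iSup_eq_top (fun g => ?_)
    (top_le_iff.1 ?_)
  · have disjoint_compl : Disjoint (𝓗 {g}) (𝓗 {g}ᶜ) := disjoint_Hgr disjoint_compl_right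
    refine disjoint_compl.mono_right ?_
    exact iSup₂_le fun g' (hg' : g' ≠ g) => Hgr_mono (Set.singleton_subset_iff.2 hg')
  · calc (⊤ : Submodule k H)
      _ ≤ 𝓗 Set.univ := hcs.le_Hgr (isSubcoalgebra_of_le_comap (by simp) (by simp)) (by simp)
      _ ≤ ⨆ g : G, 𝓗 {g} := Hgr_le_of_forall_singleton fun g _ => le_iSup (fun g => 𝓗 {g}) g

section

variable (hcs : IsCosemisimple k H) (hdeg : IsGrading k H G deg)
include hcs hdeg

lemma IsSimpleSubcoalgebra.one_le_mul {C : Submodule k H} (hC : IsSimpleSubcoalgebra k H C) :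
    1 ≤ C * 𝓗 {(deg C)⁻¹} := by
  have : Nontrivial H := (Submodule.nontrivial_iff k).1 ⟨C, ⊥, hC.2.1⟩
  have one_simple := isSimpleSubcoalgebra_one (k := k) (H := H)
  have one_le_sSup : 1 ≤ sSup {D | ∃ F, IsSimpleSubcoalgebra k H F ∧ D = C * F} := by
    refine (hC.1.one_le_mul_map_antipode hC.2.1).trans ?_
    rw [hcs _ hC.1.map_antipode, sSup_eq_iSup]
    simp only [Submodule.mul_iSup]
    exact iSup₂_le fun F hF => le_sSup ⟨F, hF.1, rfl⟩
  obtain ⟨_, ⟨F, hF, rfl⟩, hle⟩ := one_simple.exists_le_of_le_sSup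
    (by rintro _ ⟨F, hF, rfl⟩; exact hC.1.mul hF.1) one_le_sSup
  have deg_F : deg F = (deg C)⁻¹ := eq_inv_of_mul_eq_one_right <| by
    rw [← hdeg C F 1 hC hF one_simple hle, deg_one hdeg]
  exact hle.trans (mul_le_mul_right (hF.le_Hgr (T := {(deg C)⁻¹}) deg_F) C)

lemma one_le_Hgr_mul_Hgr_inv {g : G} (hg : 𝓗 {g} ≠ ⊥) : 1 ≤ 𝓗 {g} * 𝓗 {g⁻¹} := by
  obtain ⟨C, hCg, hC⟩ := (isSubcoalgebra_Hgr _).exists_simple_le hg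
  obtain rfl : deg C = g := hC.deg_mem hCg
  exact (hC.one_le_mul hcs hdeg).trans (mul_le_mul_left hCg _)

lemma Hgr_singleton_le_mul {g : G} (hg : 𝓗 {g} ≠ ⊥) (s : G) : 𝓗 {s} ≤ 𝓗 {g} * 𝓗 {g⁻¹ * s} := calc
  𝓗 {s} = 1 * 𝓗 {s} := (one_mul _).symm
  _ ≤ 𝓗 {g} * 𝓗 {g⁻¹} * 𝓗 {s} := mul_le_mul_left (one_le_Hgr_mul_Hgr_inv hcs hdeg hg) _
  _ = 𝓗 {g} * (𝓗 {g⁻¹} * 𝓗 {s}) := mul_assoc ..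
  _ ≤ 𝓗 {g} * 𝓗 {g⁻¹ * s} := mul_le_mul_right (Hgr_singleton_mul_le hcs hdeg _ _) _

lemma Hgr_inv_mul_ne_bot {g s : G} (hg : 𝓗 {g} ≠ ⊥) (hs : 𝓗 {s} ≠ ⊥) : 𝓗 {g⁻¹ * s} ≠ ⊥ :=
  fun h => hs (le_bot_iff.1 (by simpa [h] using Hgr_singleton_le_mul hcs hdeg hg s))

variable {Ng : Subgroup G} {K : Subalgebra k H} (hK : K.toSubmodule = Hgr k H G deg Ng)
include hK

lemma CKsub_eq_Hgr {C : Submodule k H} (hC : IsSimpleSubcoalgebra k H C) :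
    CKsub k H K C = 𝓗 {s | (deg C)⁻¹ * s ∈ Ng} := by
  rw [CKsub, hK]
  apply le_antisymm
  · calc C * 𝓗 (Ng : Set G)
      _ ≤ 𝓗 {deg C} * 𝓗 (Ng : Set G) := mul_le_mul_left (hC.le_Hgr (Set.mem_singleton _)) _
      _ ≤ _ := Hgr_mul_le hcs hdeg (by rintro _ rfl n hn; simpa using hn)
  · calc 𝓗 {s | (deg C)⁻¹ * s ∈ Ng}
      _ = 1 * 𝓗 {s | (deg C)⁻¹ * s ∈ Ng} := (one_mul _).symm
      _ ≤ C * 𝓗 {(deg C)⁻¹} * 𝓗 {s | (deg C)⁻¹ * s ∈ Ng} :=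
        mul_le_mul_left (hC.one_le_mul hcs hdeg) _
      _ = C * (𝓗 {(deg C)⁻¹} * 𝓗 {s | (deg C)⁻¹ * s ∈ Ng}) := mul_assoc ..
      _ ≤ C * 𝓗 (Ng : Set G) :=
        mul_le_mul_right (Hgr_mul_le hcs hdeg (by rintro _ rfl s hs; exact hs)) C

lemma Hgr_singleton_le_CKsub {C : Submodule k H} (hC : IsSimpleSubcoalgebra k H C) {s : G}
    (hs : (deg C)⁻¹ * s ∈ Ng) : 𝓗 {s} ≤ CKsub k H K C := by
  rw [CKsub_eq_Hgr hcs hdeg hK hC]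
  exact Hgr_mono (Set.singleton_subset_iff.2 hs)

lemma exists_mul_integral_eq_counit_smul {Λ : H} (hΛ : IsIdempotentIntegral k H K Λ)
    {C : Submodule k H} (hC : IsSimpleSubcoalgebra k H C) :
    ∃ w : H, ∀ x ∈ CKsub k H K C, x * Λ = counit (R := k) x • w := by
  -- `1` is a sum of products `a * b` with `a ∈ C` and `b` of degree `(deg C)⁻¹`, so `b * x ∈ K`.
  suffices h : ∀ z ∈ C * 𝓗 {(deg C)⁻¹}, ∃ w : H, ∀ x ∈ CKsub k H K C,
      z * x * Λ = counit (R := k) x • w by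
    simpa only [one_mul] using h 1 (Submodule.one_le.1 (hC.one_le_mul hcs hdeg))
  intro z hz
  induction hz using Submodule.mul_induction_on' with
  | mem_mul_mem a _ b hb =>
    refine ⟨counit (R := k) b • (a * Λ), fun x hx => ?_⟩
    have bx_mem : b * x ∈ K := by
      rw [CKsub_eq_Hgr hcs hdeg hK hC] at hx
      rw [← Subalgebra.mem_toSubmodule, hK]
      exact Hgr_mul_le hcs hdeg (by rintro _ rfl s hs; exact hs) (Submodule.mul_mem_mul hb hx)
    rw [mul_assoc a, mul_assoc a, (hΛ.2.2 _ bx_mem).1, Bialgebra.counit_mul, mul_smul_comm,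
      smul_smul, mul_comm]
  | add x _ y _ hx hy =>
    obtain ⟨w, hw⟩ := hx
    obtain ⟨w', hw'⟩ := hy
    exact ⟨w + w', fun u hu => by rw [add_mul, add_mul, hw u hu, hw' u hu, smul_add]⟩

lemma Hgr_singleton_le_conjK {Λ : H} (hΛ : IsIdempotentIntegral k H K Λ) {C : Submodule k H}
    (hC : IsSimpleSubcoalgebra k H C) {t : G} (ht : (deg C)⁻¹ * t * deg C ∈ Ng) :
    𝓗 {t} ≤ conjK k H K Λ C := by
  obtain ⟨w, hw⟩ := exists_mul_integral_eq_counit_smul hcs hdeg hK hΛ hC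
  refine sSup_le fun D hD => le_sSup ⟨hD.1, fun d hd _ c hc _ => ?_⟩
  have c_mem : c ∈ CKsub k H K C :=
    Hgr_singleton_le_CKsub hcs hdeg hK hC (by simp) (hC.le_Hgr (Set.mem_singleton _) hc)
  have dc_mem : d * c ∈ CKsub k H K C :=
    Hgr_singleton_le_CKsub hcs hdeg hK hC (by rwa [← mul_assoc])
      (Hgr_singleton_mul_le hcs hdeg t (deg C)
        (Submodule.mul_mem_mul (hD.1.le_Hgr hD.2 hd) (hC.le_Hgr (Set.mem_singleton _) hc)))
  rw [← mul_assoc, hw _ dc_mem, hw _ c_mem, Bialgebra.counit_mul, smul_smul]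

end

end Grading

/-! ### Universal properties of the induced modules -/

section Induction

universe v

variable {k : Type} [Field k] {H : Type} [Ring H] [HopfAlgebra k H]

lemma mul_mem_CKsub {K : Subalgebra k H} {C : Submodule k H} {x a : H} (hx : x ∈ CKsub k H K C)
    (ha : a ∈ K) : x * a ∈ CKsub k H K C := by
  have hxa : x * a ∈ C * K.toSubmodule * K.toSubmodule := Submodule.mul_mem_mul hx ha
  rwa [mul_assoc, K.isIdempotentElem_toSubmodule.eq] at hxa

variable (L K : Subalgebra k H) (Λ : H) (C : Submodule k H)
variable (M : Type v) [AddCommGroup M] [Module k M] [Module ↥K M]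

/-- The bilinear map `(x, m) ↦ x ⊗ m` from `CK × M` to `CK ⊗_k M`, see `ckmk`. -/
def ckmkₗ : ↥(CKsub k H K C) →ₗ[k] M →ₗ[k] CKM k H K M C :=
  TensorProduct.mk k ↥(CKsub k H K C) M

/-- The bilinear map `(l, w) ↦ l ⊗ w` from `L × (CK ⊗_k M)` to `L ⊗_k (CK ⊗_k M)`, see `lcmk`. -/
def lcmkₗ : ↥L →ₗ[k] CKM k H K M C →ₗ[k] LCM k H L K C M :=
  TensorProduct.mk k ↥L (CKM k H K M C)

/-- The class of `l ⊗ (x ⊗ m)` in `L ⊗_{L ∩ ᶜK} ᶜM`, extended linearly from `l ∈ L` and `x ∈ CK` to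
all of `H` along arbitrary retractions, so that it can be composed with linear maps of `H`. -/
def compMk : H →ₗ[k] H →ₗ[k] M →ₗ[k] Comp k H L K Λ C M :=
  (LinearMap.mk₂ k (fun (l : ↥L) x => (compRel k H L K Λ C M).mkQ ∘ₗ lcmkₗ L K C M l ∘ₗ
      ckmkₗ K C M x)
    (fun l l' x => by rw [map_add, LinearMap.add_comp, LinearMap.comp_add])
    (fun c l x => by rw [map_smul, LinearMap.smul_comp, LinearMap.comp_smul])
    (fun l x x' => by rw [map_add, LinearMap.comp_add, LinearMap.comp_add])
    (fun c l x => by rw [map_smul, LinearMap.comp_smul, LinearMap.comp_smul])).compl₁₂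
    L.val.toLinearMap.leftInverse (CKsub k H K C).subtype.leftInverse

/-- The class of `h ⊗ m` in `H ⊗_K M`. -/
def indMk : H →ₗ[k] M →ₗ[k] Ind k H K M :=
  (TensorProduct.mk k H M).compr₂ ((indRel k H K M).mkQ.restrictScalars k)

variable {L K Λ C M}

lemma compMk_of_mem {l x : H} (hl : l ∈ L) (hx : x ∈ CKsub k H K C) (m : M) :
    compMk L K Λ C M l x m =
      Submodule.Quotient.mk (lcmk k H L K C M ⟨l, hl⟩ (ckmk k H K M C ⟨x, hx⟩ m)) := by
  have hl' : L.val.toLinearMap.leftInverse l = ⟨l, hl⟩ :=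
    LinearMap.leftInverse_apply_of_inj (f := L.val.toLinearMap)
      (LinearMap.ker_eq_bot.2 Subtype.val_injective) ⟨l, hl⟩
  have hx' : (CKsub k H K C).subtype.leftInverse x = ⟨x, hx⟩ :=
    LinearMap.leftInverse_apply_of_inj (CKsub k H K C).ker_subtype ⟨x, hx⟩
  rw [compMk, LinearMap.compl₁₂_apply, hl', hx']
  rfl

lemma compMk_mul {l a x : H} (hl : l ∈ L) (ha : a ∈ L) (ha' : a ∈ conjK k H K Λ C)
    (hx : x ∈ CKsub k H K C) (hax : a * x ∈ CKsub k H K C) :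
    compMk L K Λ C M (l * a) x = compMk L K Λ C M l (a * x) := by
  ext m
  rw [compMk_of_mem (mul_mem hl ha) hx, compMk_of_mem hl hax, Submodule.Quotient.eq]
  exact Submodule.subset_span (Or.inl ⟨⟨l, hl⟩, a, ha, ha', ⟨x, hx⟩, m, hax, rfl⟩)

lemma compMk_mul_smul {l x : H} (hl : l ∈ L) (hx : x ∈ CKsub k H K C) (a : K) (m : M) :
    compMk L K Λ C M l (x * a) m = compMk L K Λ C M l x (a • m) := by
  have hxa : x * a ∈ CKsub k H K C := mul_mem_CKsub hx a.2
  rw [compMk_of_mem hl hxa, compMk_of_mem hl hx, Submodule.Quotient.eq]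
  exact Submodule.subset_span (Or.inr ⟨⟨l, hl⟩, ⟨x, hx⟩, a, m, hxa, rfl⟩)

lemma indMk_mul_smul (h : H) (a : K) (m : M) :
    indMk K M (h * a) m = indMk K M h (a • m) := by
  refine (Submodule.Quotient.eq _).2 ?_
  have := (indRel k H K M).smul_mem h (Submodule.subset_span ⟨a, m, rfl⟩)
  rwa [smul_sub, TensorProduct.smul_tmul', TensorProduct.smul_tmul', smul_eq_mul, smul_eq_mul,
    mul_one] at this

lemma eq_top_of_indMk_mem {P : Submodule k (Ind k H K M)} (h : ∀ x m, indMk K M x m ∈ P) :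
    P = ⊤ := by
  refine (Submodule.eq_top_iff').2 fun z => ?_
  obtain ⟨z, rfl⟩ := Submodule.Quotient.mk_surjective _ z
  induction z using TensorProduct.induction_on with
  | zero => exact P.zero_mem
  | tmul x m => exact h x m
  | add x y hx hy => exact P.add_mem hx hy

variable {N : Type*} [AddCommGroup N] [Module k N]

lemma comp_hom_ext {f g : Comp k H L K Λ C M →ₗ[k] N}
    (h : ∀ l ∈ L, ∀ x ∈ CKsub k H K C, ∀ m,
      f (compMk L K Λ C M l x m) = g (compMk L K Λ C M l x m)) : f = g := by
  refine Submodule.linearMap_qext _ ?_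
  refine TensorProduct.ext (M := ↥L) (N := CKM k H K M C) (LinearMap.ext fun l => ?_)
  refine TensorProduct.ext' (M := ↥(CKsub k H K C)) (N := M) fun x m => ?_
  have hlxm := h l l.2 x x.2 m
  rwa [compMk_of_mem l.2 x.2] at hlxm

lemma exists_comp_lift (F : H →ₗ[k] M →ₗ[k] N)
    (hF : ∀ (h : H) (a : K) (m : M), F (h * a) m = F h (a • m)) :
    ∃ f : Comp k H L K Λ C M →ₗ[k] N, ∀ l ∈ L, ∀ x ∈ CKsub k H K C, ∀ m,
      f (compMk L K Λ C M l x m) = F (l * x) m := by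
  let F₁ : ↥L →ₗ[k] CKM k H K M C →ₗ[k] N :=
    TensorProduct.uncurry (RingHom.id k) ↥(CKsub k H K C) M N ∘ₗ
      ((LinearMap.mul k H).compr₂ F).compl₁₂ L.val.toLinearMap (CKsub k H K C).subtype
  let F₂ : LCM k H L K C M →ₗ[k] N := TensorProduct.lift F₁
  have F₂_lcmk (l x m) : F₂ (lcmk k H L K C M l (ckmk k H K M C x m)) = F ((l : H) * x) m := rfl
  refine ⟨(compRel k H L K Λ C M).liftQ F₂ (Submodule.span_le.2 ?_), fun l hl x hx m => ?_⟩
  · rintro _ (⟨l, a, haL, -, x, m, hax, rfl⟩ | ⟨l, x, a, m, hxa, rfl⟩)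
    · rw [SetLike.mem_coe, LinearMap.mem_ker, map_sub, F₂_lcmk, F₂_lcmk, mul_assoc, sub_self]
    · rw [SetLike.mem_coe, LinearMap.mem_ker, map_sub, F₂_lcmk, F₂_lcmk, ← mul_assoc, hF, sub_self]
  · rw [compMk_of_mem hl hx]
    exact F₂_lcmk ⟨l, hl⟩ ⟨x, hx⟩ m

lemma exists_ind_lift (F : H →ₗ[k] M →ₗ[k] N)
    (hF : ∀ (h : H) (a : K) (m : M), F (h * a) m = F h (a • m)) :
    ∃ f : Ind k H K M →ₗ[k] N, ∀ h m, f (indMk K M h m) = F h m := by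
  have lift_smul_eq_zero (z) (hz : z ∈ indRel k H K M) :
      ∀ h : H, TensorProduct.lift F (h • z) = 0 := by
    induction hz using Submodule.span_induction with
    | mem z hz =>
      obtain ⟨a, m, rfl⟩ := hz
      intro h
      rw [smul_sub, TensorProduct.smul_tmul', TensorProduct.smul_tmul', map_sub,
        TensorProduct.lift.tmul, TensorProduct.lift.tmul, smul_eq_mul, smul_eq_mul, mul_one, hF,
        sub_self]
    | zero => simp
    | add x y _ _ hx hy => intro h; rw [smul_add, map_add, hx, hy, add_zero]
    | smul a x _ hx => intro h; rw [smul_smul, hx]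
  refine ⟨((indRel k H K M).restrictScalars k).liftQ (TensorProduct.lift F) (fun z hz => ?_) ∘ₗ
    (Submodule.Quotient.restrictScalarsEquiv k (indRel k H K M)).symm.toLinearMap, fun h m => rfl⟩
  rw [LinearMap.mem_ker, ← one_smul H z, lift_smul_eq_zero z hz]

end Induction

/-! ### Mackey decomposition along the grading -/

section Mackey

open DirectSum

universe v

lemma exists_linearMap_eq_of_isInternal {ι R V W : Type*} [DecidableEq ι] [Semiring R]
    [AddCommMonoid V] [Module R V] [AddCommMonoid W] [Module R W] {A : ι → Submodule R V}
    (hA : DirectSum.IsInternal A) (Φ : ι → V →ₗ[R] W) :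
    ∃ Ψ : V →ₗ[R] W, ∀ i, ∀ x ∈ A i, Ψ x = Φ i x := by
  let e := LinearEquiv.ofBijective (DirectSum.coeLinearMap A) hA
  refine ⟨DirectSum.toModule R ι W (fun i => Φ i ∘ₗ (A i).subtype) ∘ₗ e.symm.toLinearMap,
    fun i x hx => ?_⟩
  have symm_apply : e.symm x = DirectSum.lof R ι (fun i => A i) i ⟨x, hx⟩ :=
    e.symm_apply_eq.2 (DirectSum.coeLinearMap_lof A i ⟨x, hx⟩).symm
  rw [LinearMap.comp_apply, LinearEquiv.coe_coe, symm_apply, DirectSum.toModule_lof]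
  rfl

variable {k : Type} [Field k] {H : Type} [Ring H] [HopfAlgebra k H] {L K : Subalgebra k H}
  {ι : Type} {rep : ι → Submodule k H} {N : Type*} [AddCommMonoid N] [Module k N]

namespace IsDoubleCosetReps

lemma top_le_iSup (hcs : IsCosemisimple k H) (hrep : IsDoubleCosetReps k H L K rep) :
    ⊤ ≤ ⨆ i, L.toSubmodule * CKsub k H K (rep i) := by
  rw [hcs ⊤ (isSubcoalgebra_of_le_comap (by simp) (by simp))]
  refine sSup_le fun C hC => ?_
  obtain ⟨i, hi⟩ := hrep.2.2 C hC.1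
  rw [mul_assoc] at hi
  exact le_iSup_of_le i hi

lemma hom_ext (hcs : IsCosemisimple k H) (hrep : IsDoubleCosetReps k H L K rep) {f g : H →ₗ[k] N}
    (h : ∀ i, ∀ l ∈ L, ∀ x ∈ CKsub k H K (rep i), f (l * x) = g (l * x)) : f = g := by
  have top_le_eqLocus : ⊤ ≤ LinearMap.eqLocus f g := (hrep.top_le_iSup hcs).trans
    (iSup_le fun i => Submodule.mul_le.2 fun l hl x hx => h i l hl x hx)
  exact LinearMap.eqLocus_eq_top.1 (top_le_iff.1 top_le_eqLocus)

end IsDoubleCosetReps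

variable {Λ : H} {M : Type v} [AddCommGroup M] [Module k M] [Module ↥K M]

lemma exists_mackeyMap [DecidableEq ι] (rep : ι → Submodule k H) :
    ∃ π : (⨁ i, Comp k H L K Λ (rep i) M) →ₗ[k] Ind k H K M,
      ∀ i, ∀ l ∈ L, ∀ x ∈ CKsub k H K (rep i), ∀ m,
        π (DirectSum.lof k ι (fun i => Comp k H L K Λ (rep i) M) i
          (compMk L K Λ (rep i) M l x m)) = indMk K M (l * x) m := by
  choose f hf using fun i => exists_comp_lift (L := L) (Λ := Λ) (C := rep i) (indMk K M)
    indMk_mul_smul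
  refine ⟨DirectSum.toModule k ι _ f, fun i l hl x hx m => ?_⟩
  rw [DirectSum.toModule_lof, hf i l hl x hx]

lemma IsDoubleCosetReps.range_eq_top (hcs : IsCosemisimple k H)
    (hrep : IsDoubleCosetReps k H L K rep) {π : N →ₗ[k] Ind k H K M}
    (hπ : ∀ i, ∀ l ∈ L, ∀ x ∈ CKsub k H K (rep i), ∀ m,
      indMk K M (l * x) m ∈ LinearMap.range π) : LinearMap.range π = ⊤ := by
  refine eq_top_of_indMk_mem fun h m => ?_
  have top_le_comap : ⊤ ≤ (LinearMap.range π).comap ((indMk K M).flip m) :=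
    (hrep.top_le_iSup hcs).trans
      (iSup_le fun i => Submodule.mul_le.2 fun l hl x hx => hπ i l hl x hx m)
  exact top_le_comap (Submodule.mem_top (x := h))

variable {G : Type} [Group G] {deg : Submodule k H → G} {Mg Ng : Subgroup G}

local notation "𝓗" => Hgr k H G deg

lemma eqOn_Hgr {f g : H →ₗ[k] N} {T : Set G} (h : ∀ t ∈ T, ∀ x ∈ 𝓗 {t}, f x = g x) :
    ∀ x ∈ 𝓗 T, f x = g x :=
  (Hgr_le_of_forall_singleton h : 𝓗 T ≤ LinearMap.eqLocus f g)

variable [FiniteDimensional k H] (hcs : IsCosemisimple k H) (hdeg : IsGrading k H G deg)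
  (hL : L.toSubmodule = Hgr k H G deg Mg) (hK : K.toSubmodule = Hgr k H G deg Ng)
include hcs hdeg hK

section

include hL

lemma mul_mul_le_of_deg {C D : Submodule k H} (hC : IsSimpleSubcoalgebra k H C)
    (hD : IsSimpleSubcoalgebra k H D) {m : G} (hm : m ∈ Mg) (hm0 : 𝓗 {m} ≠ ⊥)
    (h : (deg D)⁻¹ * (m⁻¹ * deg C) ∈ Ng) :
    L.toSubmodule * C * K.toSubmodule ≤ L.toSubmodule * D * K.toSubmodule := by
  have C_le : C ≤ L.toSubmodule * (D * K.toSubmodule) := calc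
    C ≤ 𝓗 {deg C} := hC.le_Hgr (Set.mem_singleton _)
    _ ≤ 𝓗 {m} * 𝓗 {m⁻¹ * deg C} := Hgr_singleton_le_mul hcs hdeg hm0 _
    _ ≤ L.toSubmodule * (D * K.toSubmodule) :=
      mul_le_mul' (hL ▸ Hgr_mono (Set.singleton_subset_iff.2 hm))
        (Hgr_singleton_le_CKsub hcs hdeg hK hD h)
  calc L.toSubmodule * C * K.toSubmodule
    _ ≤ L.toSubmodule * (L.toSubmodule * (D * K.toSubmodule)) * K.toSubmodule := by gcongr
    _ = (L.toSubmodule * L.toSubmodule) * D * (K.toSubmodule * K.toSubmodule) := by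
      simp only [mul_assoc]
    _ = L.toSubmodule * D * K.toSubmodule := by
      rw [L.isIdempotentElem_toSubmodule.eq, K.isIdempotentElem_toSubmodule.eq]

lemma IsDoubleCosetReps.eq_of_deg (hrep : IsDoubleCosetReps k H L K rep) {i j : ι} {m n g : G}
    (hm : m ∈ Mg) (hm0 : 𝓗 {m} ≠ ⊥) (hi : (deg (rep i))⁻¹ * (m⁻¹ * g) ∈ Ng)
    (hn : n ∈ Mg) (hn0 : 𝓗 {n} ≠ ⊥) (hj : (deg (rep j))⁻¹ * (n⁻¹ * g) ∈ Ng) : i = j := by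
  have le {i j : ι} {m n : G} (hm : m ∈ Mg) (hm0 : 𝓗 {m} ≠ ⊥)
      (hi : (deg (rep i))⁻¹ * (m⁻¹ * g) ∈ Ng) (hn : n ∈ Mg) (hn0 : 𝓗 {n} ≠ ⊥)
      (hj : (deg (rep j))⁻¹ * (n⁻¹ * g) ∈ Ng) :
      L.toSubmodule * rep i * K.toSubmodule ≤ L.toSubmodule * rep j * K.toSubmodule := by
    refine mul_mul_le_of_deg hcs hdeg hL hK (hrep.1 i) (hrep.1 j) (mul_mem (inv_mem hm) hn)
      (Hgr_inv_mul_ne_bot hcs hdeg hm0 hn0) ?_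
    simpa [mul_assoc] using mul_mem hj (inv_mem hi)
  exact hrep.2.1 i j (le_antisymm (le hm hm0 hi hn hn0 hj) (le hn hn0 hj hm hm0 hi))

variable (hΛ : IsIdempotentIntegral k H K Λ)
include hΛ

lemma exists_compMk_eq_of_deg {C : Submodule k H} (hC : IsSimpleSubcoalgebra k H C) {n g : G}
    (hn : n ∈ Mg) (hn0 : 𝓗 {n} ≠ ⊥) (hng : (deg C)⁻¹ * (n⁻¹ * g) ∈ Ng) :
    ∃ Φ : H →ₗ[k] M →ₗ[k] Comp k H L K Λ C M,
      ∀ m ∈ Mg, ∀ s, (deg C)⁻¹ * s ∈ Ng → m * s = g → ∀ l ∈ 𝓗 {m}, ∀ x ∈ 𝓗 {s},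
        Φ (l * x) = compMk L K Λ C M l x := by
  -- Writing `1 = ∑ aᵢ bᵢ` with `aᵢ` of degree `n` and `bᵢ` of degree `n⁻¹`, take
  -- `Φ h = ∑ aᵢ ⊗ bᵢ h`; the factors `bᵢ l` cross the tensor sign because they lie in `L ∩ ᶜK`.
  suffices h : ∀ z ∈ 𝓗 {n} * 𝓗 {n⁻¹}, ∃ Φ : H →ₗ[k] M →ₗ[k] Comp k H L K Λ C M,
      ∀ m ∈ Mg, ∀ s, (deg C)⁻¹ * s ∈ Ng → m * s = g → ∀ l ∈ 𝓗 {m}, ∀ x ∈ 𝓗 {s},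
        Φ (l * x) = compMk L K Λ C M (z * l) x by
    simpa only [one_mul] using h 1 (Submodule.one_le.1 (one_le_Hgr_mul_Hgr_inv hcs hdeg hn0))
  have mem_L {m : G} (hm : m ∈ Mg) {l : H} (hl : l ∈ 𝓗 {m}) : l ∈ L := by
    rw [← Subalgebra.mem_toSubmodule, hL]
    exact Hgr_mono (Set.singleton_subset_iff.2 hm) hl
  intro z hz
  induction hz using Submodule.mul_induction_on' with
  | mem_mul_mem a ha b hb =>
    refine ⟨compMk L K Λ C M a ∘ₗ LinearMap.mulLeft k b, fun m hm s hs hg l hl x hx => ?_⟩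
    have bl_mem : b * l ∈ 𝓗 {n⁻¹ * m} :=
      Hgr_singleton_mul_le hcs hdeg _ _ (Submodule.mul_mem_mul hb hl)
    have blx_mem : b * l * x ∈ 𝓗 {n⁻¹ * m * s} :=
      Hgr_singleton_mul_le hcs hdeg _ _ (Submodule.mul_mem_mul bl_mem hx)
    have bl_mem_conjK : b * l ∈ conjK k H K Λ C :=
      Hgr_singleton_le_conjK hcs hdeg hK hΛ hC
        (by simpa [mul_assoc, ← hg] using mul_mem hng (inv_mem hs)) bl_mem
    have x_mem_CK : x ∈ CKsub k H K C := Hgr_singleton_le_CKsub hcs hdeg hK hC hs hx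
    have blx_mem_CK : b * l * x ∈ CKsub k H K C :=
      Hgr_singleton_le_CKsub hcs hdeg hK hC (by rwa [mul_assoc n⁻¹, hg]) blx_mem
    rw [LinearMap.comp_apply, LinearMap.mulLeft_apply, ← mul_assoc b, mul_assoc a,
      compMk_mul (mem_L hn ha) (mem_L (mul_mem (inv_mem hn) hm) bl_mem) bl_mem_conjK x_mem_CK
        blx_mem_CK]
  | add z _ z' _ hz hz' =>
    obtain ⟨Φ, hΦ⟩ := hz
    obtain ⟨Φ', hΦ'⟩ := hz'
    refine ⟨Φ + Φ', fun m hm s hs hg l hl x hx => ?_⟩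
    rw [LinearMap.add_apply, hΦ m hm s hs hg l hl x hx, hΦ' m hm s hs hg l hl x hx, add_mul,
      map_add, LinearMap.add_apply]

variable [DecidableEq ι] (hrep : IsDoubleCosetReps k H L K rep)
include hrep

lemma exists_homogeneous_lift (g : G) :
    ∃ Φ : H →ₗ[k] M →ₗ[k] ⨁ i, Comp k H L K Λ (rep i) M,
      ∀ i, ∀ m ∈ Mg, ∀ s, (deg (rep i))⁻¹ * s ∈ Ng → m * s = g → ∀ l ∈ 𝓗 {m}, ∀ x ∈ 𝓗 {s}, ∀ v,
        Φ (l * x) v = DirectSum.lof k ι (fun i => Comp k H L K Λ (rep i) M) i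
          (compMk L K Λ (rep i) M l x v) := by
  have eq_zero_or {m : G} {l : H} (hl : l ∈ 𝓗 {m}) : l = 0 ∨ 𝓗 {m} ≠ ⊥ :=
    or_iff_not_imp_right.2 fun h => by rwa [not_not.1 h, Submodule.mem_bot] at hl
  by_cases hex : ∃ j, ∃ n ∈ Mg, 𝓗 {n} ≠ ⊥ ∧ (deg (rep j))⁻¹ * (n⁻¹ * g) ∈ Ng
  · obtain ⟨j, n, hn, hn0, hj⟩ := hex
    obtain ⟨Φ, hΦ⟩ := exists_compMk_eq_of_deg (M := M) hcs hdeg hL hK hΛ (hrep.1 j) hn hn0 hj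
    refine ⟨Φ.compr₂ (DirectSum.lof k ι (fun i => Comp k H L K Λ (rep i) M) j),
      fun i m hm s hs hg l hl x hx v => ?_⟩
    obtain rfl | hm0 := eq_zero_or hl
    · simp
    have hi : (deg (rep i))⁻¹ * (m⁻¹ * g) ∈ Ng := by rwa [← hg, inv_mul_cancel_left]
    obtain rfl : i = j := hrep.eq_of_deg hcs hdeg hL hK hm hm0 hi hn hn0 hj
    rw [LinearMap.compr₂_apply, hΦ m hm s hs hg l hl x hx]
  · refine ⟨0, fun i m hm s _ hg l hl x _ v => ?_⟩
    obtain rfl | hm0 := eq_zero_or hl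
    · simp
    · exact absurd ⟨i, m, hm, hm0, by rwa [← hg, inv_mul_cancel_left]⟩ hex

lemma exists_lof_compMk_lift :
    ∃ Ψ : H →ₗ[k] M →ₗ[k] ⨁ i, Comp k H L K Λ (rep i) M,
      ∀ i, ∀ l ∈ L, ∀ x ∈ CKsub k H K (rep i), ∀ v,
        Ψ (l * x) v = DirectSum.lof k ι (fun i => Comp k H L K Λ (rep i) M) i
          (compMk L K Λ (rep i) M l x v) := by
  classical
  choose Φ hΦ using exists_homogeneous_lift (M := M) hcs hdeg hL hK hΛ hrep
  obtain ⟨Ψ, hΨ⟩ := exists_linearMap_eq_of_isInternal (isInternal_Hgr_singleton hcs) Φ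
  refine ⟨Ψ, fun i l hl x hx v => ?_⟩
  rw [← Subalgebra.mem_toSubmodule, hL] at hl
  rw [CKsub_eq_Hgr hcs hdeg hK (hrep.1 i)] at hx
  let mulΨ : H →ₗ[k] H →ₗ[k] M →ₗ[k] ⨁ i, Comp k H L K Λ (rep i) M := (LinearMap.mul k H).compr₂ Ψ
  let lofMk : H →ₗ[k] H →ₗ[k] M →ₗ[k] ⨁ i, Comp k H L K Λ (rep i) M :=
    (compMk L K Λ (rep i) M).compr₂
      (LinearMap.compRight k (DirectSum.lof k ι (fun i => Comp k H L K Λ (rep i) M) i))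
  suffices h : mulΨ.flip x l = lofMk.flip x l from LinearMap.congr_fun h v
  refine eqOn_Hgr (f := mulΨ.flip x) (g := lofMk.flip x) (fun m hm l hl => ?_) l hl
  refine eqOn_Hgr (f := mulΨ l) (g := lofMk l) (fun s hs x hx => ?_) x hx
  refine LinearMap.ext fun v => ?_
  have lx_mem : l * x ∈ 𝓗 {m * s} :=
    Hgr_singleton_mul_le hcs hdeg _ _ (Submodule.mul_mem_mul hl hx)
  exact (LinearMap.congr_fun (hΨ _ _ lx_mem) v).trans (hΦ (m * s) i m hm s hs rfl l hl x hx v)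

lemma exists_mackeyMap_leftInverse :
    ∃ φ : Ind k H K M →ₗ[k] ⨁ i, Comp k H L K Λ (rep i) M,
      ∀ i, ∀ l ∈ L, ∀ x ∈ CKsub k H K (rep i), ∀ m,
        φ (indMk K M (l * x) m) = DirectSum.lof k ι (fun i => Comp k H L K Λ (rep i) M) i
          (compMk L K Λ (rep i) M l x m) := by
  obtain ⟨Ψ, hΨ⟩ := exists_lof_compMk_lift (M := M) hcs hdeg hL hK hΛ hrep
  have balanced (h : H) (a : K) (m : M) : Ψ (h * a) m = Ψ h (a • m) := by
    have flip_eq : Ψ.flip m ∘ₗ LinearMap.mulRight k (a : H) = Ψ.flip (a • m) := by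
      refine hrep.hom_ext hcs fun i l hl x hx => ?_
      rw [LinearMap.comp_apply, LinearMap.mulRight_apply, LinearMap.flip_apply,
        LinearMap.flip_apply, mul_assoc, hΨ i l hl _ (mul_mem_CKsub hx a.2), hΨ i l hl x hx,
        compMk_mul_smul hl hx]
    exact LinearMap.congr_fun flip_eq h
  obtain ⟨φ, hφ⟩ := exists_ind_lift Ψ balanced
  exact ⟨φ, fun i l hl x hx m => (hφ _ _).trans (hΨ i l hl x hx m)⟩

end

end Mackey

universe v

open DirectSum in
theorem statement_16_general {k : Type} [Field k] {H : Type} [Ring H] [HopfAlgebra k H]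
    [FiniteDimensional k H] (hcs : IsCosemisimple k H) {G : Type} [Group G]
    {deg : Submodule k H → G} (hdeg : IsGrading k H G deg) {Mg Ng : Subgroup G}
    {LM LN : Subalgebra k H} (hLM : LM.toSubmodule = Hgr k H G deg ↑Mg)
    (hLN : LN.toSubmodule = Hgr k H G deg ↑Ng) {Λ : H} (hΛ : IsIdempotentIntegral k H LN Λ)
    (M : Type v) [AddCommGroup M] [Module k M] [Module ↥LN M] [IsScalarTower k ↥LN M]
    {ι : Type} [DecidableEq ι] {rep : ι → Submodule k H}
    (hrep : IsDoubleCosetReps k H LM LN rep) :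
    ∃ π : (⨁ i, Comp k H LM LN Λ (rep i) M) →ₗ[k] Ind k H LN M,
      Function.Bijective π ∧
      ∀ (i : ι) (l : ↥LM) (x : ↥(CKsub k H LN (rep i))) (m : M),
        π (DirectSum.of (fun i => Comp k H LM LN Λ (rep i) M) i
            (Submodule.Quotient.mk (lcmk k H LM LN (rep i) M l (ckmk k H LN M (rep i) x m)))) =
          Submodule.Quotient.mk (((l : H) * (x : H)) ⊗ₜ[k] m) := by
  obtain ⟨π, hπ⟩ := exists_mackeyMap (L := LM) (K := LN) (Λ := Λ) (M := M) rep
  obtain ⟨φ, hφ⟩ := exists_mackeyMap_leftInverse (M := M) hcs hdeg hLM hLN hΛ hrep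
  have φ_comp_π : φ ∘ₗ π = LinearMap.id := DirectSum.linearMap_ext _ fun i =>
    comp_hom_ext fun l hl x hx m => (congrArg φ (hπ i l hl x hx m)).trans (hφ i l hl x hx m)
  have range_π : LinearMap.range π = ⊤ :=
    hrep.range_eq_top hcs fun i l hl x hx m => ⟨_, hπ i l hl x hx m⟩
  refine ⟨π, ⟨Function.LeftInverse.injective (LinearMap.congr_fun φ_comp_π),
    LinearMap.range_eq_top.1 range_π⟩, fun i l x m => ?_⟩
  rw [← compMk_of_mem l.2 x.2]
  exact hπ i l l.2 x x.2 m

variable (k : Type) [Field k] [CharZero k] [IsAlgClosed k]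
variable (H : Type) [Ring H] [HopfAlgebra k H]

section Statements

variable [FiniteDimensional k H] [IsSemisimpleRing H]

/-- Theorem 61: let `G` be a grading group of the fusion
category `Rep(H^*)` and let `M, N ≤ G` be any two subgroups.  Then
`(H(M), H(N))` is a Mackey pair of Hopf subalgebras of `H`.  (Here `Λ` is
the idempotent integral of `H(N)`.) -/
theorem statement_16 (G : Type) [Group G] [Finite G]
    (deg : Submodule k H → G) (hdeg : IsGrading k H G deg)
    (Mg Ng : Subgroup G) (LM LN : Subalgebra k H)
    (hLM : LM.toSubmodule = Hgr k H G deg ↑Mg)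
    (hLN : LN.toSubmodule = Hgr k H G deg ↑Ng)
    (Λ : H) (hΛ : IsIdempotentIntegral k H LN Λ) :
    IsMackeyPair.{v} k H LM LN Λ := by
  intro M _ _ _ _ _ ι _ rep hrep
  obtain ⟨τ, hτ, hτ1⟩ := exists_isRightIntegral_apply_one_eq_one k H
  exact statement_16_general (hτ.isCosemisimple hτ1) hdeg hLM hLN hΛ M hrep

end Statements

end

end MackeyPaper
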